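/- arXiv:2307.13543 — 4 statements merged into one kernel-verified Lean document; each statement's English description precedes it below -/
import Mathlib

section
/- Let Z ⊆ Σ^ℤ be a sofic shift, n ∈ ℕ, and f : ℝ^n × Z → ℝ^n. The system x(k+1) = f(x(k), σ^k(z)) is globally uniformly asymptotically stable (GUAS) if and only if it admits a sequence-dependent Lyapunov function, i.e. a function V : ℝ^n × Z → ℝ, functions α₁, α₂ of class K∞ and a constant γ ∈ [0,1) such that α₁(|x|) ≤ V(x, z) ≤ α₂(|x|) for all x ∈ ℝ^n and z ∈ Z, and V(f(x,z), σ(z)) ≤ γ V(x, z) for all x ∈ ℝ^n and z ∈ Z. -/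
open Set Filter Matrix

section Defs

variable {A : Type*}

/-- The shift map on bi-infinite sequences over the alphabet `A`. -/
def shiftMap (z : ℤ → A) : ℤ → A := fun k => z (k + 1)

/-- `s` is a bi-infinite walk, labeled by `z`, in the labeled graph with edge set `E`. -/
def IsLabeledWalk {S : Type*} (E : Set (S × S × A)) (z : ℤ → A) (s : ℤ → S) : Prop :=
  ∀ k : ℤ, (s k, s (k + 1), z k) ∈ E

/-- `Z(G)`: the set of labels of bi-infinite walks of the graph with edge set `E`. -/
def graphLang {S : Type*} (E : Set (S × S × A)) : Set (ℤ → A) :=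
  {z | ∃ s : ℤ → S, IsLabeledWalk E z s}

/-- `Z(G, s₀)`: the set of labels of bi-infinite walks starting (at time `0`) at node `s₀`. -/
def graphLangAt {S : Type*} (E : Set (S × S × A)) (s0 : S) : Set (ℤ → A) :=
  {z | ∃ s : ℤ → S, IsLabeledWalk E z s ∧ s 0 = s0}

/-- A set `Z` of bi-infinite sequences is a sofic shift if it is the set of labels of
bi-infinite walks of some finite labeled graph. -/
def IsSofic (Z : Set (ℤ → A)) : Prop :=
  ∃ (S : Type) (_ : Fintype S) (E : Set (S × S × A)), Z = graphLang E

/-- The graph with node set `Fin K` and edge set `E` is a presentation of the indexed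
covering `C` of `Z`: `Z = Z(G)` and `C j = Z(G, j)` for every node `j`. -/
def IsPresentation {K : ℕ} (E : Set (Fin K × Fin K × A)) (C : Fin K → Set (ℤ → A))
    (Z : Set (ℤ → A)) : Prop :=
  Z = graphLang E ∧ ∀ j : Fin K, C j = graphLangAt E j

/-- `C` is a graph-induced covering of `Z`. -/
def IsGCovering {K : ℕ} (C : Fin K → Set (ℤ → A)) (Z : Set (ℤ → A)) : Prop :=
  ∃ E : Set (Fin K × Fin K × A), IsPresentation E C Z

/-- The forward one-sided sequence `z⁺ = (z 0, z 1, …)`. -/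
def postSeq (z : ℤ → A) : ℕ → A := fun m => z m

/-- The backward one-sided sequence `z⁻ = (…, z (-2), z (-1))`, encoded so that index
`m` holds `z (-(m+1))` (index `0` is `z (-1)`). -/
def preSeq (z : ℤ → A) : ℕ → A := fun m => z (-(m + 1))

/-- Concatenation of a letter with a set of one-sided sequences: for forward sequences this
is `i · B`; for backward sequences (with the encoding of `preSeq`) this is `B · i`. -/
def consSeq (i : A) (B : Set (ℕ → A)) : Set (ℕ → A) :=
  {w | w 0 = i ∧ (fun m => w (m + 1)) ∈ B}

/-- Time inversion of a bi-infinite sequence: `z⁻¹ k = z (-1-k)`. -/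
def timeInv (z : ℤ → A) : ℤ → A := fun k => z (-1 - k)

/-- The transpose graph: edges are reversed, labels kept. -/
def transposeE {S : Type*} (E : Set (S × S × A)) : Set (S × S × A) :=
  {p | (p.2.1, p.1, p.2.2) ∈ E}

/-- Class `K∞` functions. -/
def IsKInf (α : ℝ → ℝ) : Prop :=
  ContinuousOn α (Set.Ici 0) ∧ StrictMonoOn α (Set.Ici 0) ∧ α 0 = 0 ∧
    Tendsto α atTop atTop

/-- Class `KL` functions. -/
def IsKL (β : ℝ → ℝ → ℝ) : Prop :=
  ContinuousOn (fun p : ℝ × ℝ => β p.1 p.2) (Set.Ici 0 ×ˢ Set.Ici 0) ∧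
  (∀ s, 0 ≤ s → ContinuousOn (fun r => β r s) (Set.Ici 0) ∧
      StrictMonoOn (fun r => β r s) (Set.Ici 0) ∧ β 0 s = 0) ∧
  (∀ r, 0 ≤ r → AntitoneOn (fun s => β r s) (Set.Ici 0) ∧
      Tendsto (fun s => β r s) atTop (nhds 0))

/-- The solution map `Φ(k, x₀, z)` of the system `x(k+1) = f(x(k), σ^k z)`. -/
def sol {n : ℕ} (f : (Fin n → ℝ) → (ℤ → A) → Fin n → ℝ) (x0 : Fin n → ℝ) (z : ℤ → A) :
    ℕ → Fin n → ℝ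
  | 0 => x0
  | k + 1 => f (sol f x0 z k) (shiftMap^[k] z)

end Defs

/-!
The pair `(x, z)` evolves under the skew product `(x, z) ↦ (f x z, σ z)`, which is autonomous, so
both implications are statements about the iterates of a single map.

Given a Lyapunov function, `V` decays geometrically along orbits and the `KL` bound is
`β(r, s) = α₁⁻¹(ρ ^ s * α₂ r)` with `γ < ρ < 1`.

Conversely, take `V(x, z) = ∑ k, 2 ^ k * α |Φ(k, x, z)|`; dropping the first term and shifting
gives the decay rate `1 / 2`. What is needed is a class `K∞` function `α` so flat at `0` that
`∑ k, 2 ^ k * α (β(r, k))` converges for every `r` (a form of Sontag's lemma on `KL` functions).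
Such an `α` is a series `∑ j, c j * (s - 1 / (j + 1))⁺`: each ramp kills all but finitely many
terms of the sequences `k ↦ β(N, k)`, and a diagonal choice of the `c j` makes the resulting finite
sums summable in `j` for every `N`.
-/

section Series

theorem continuousOn_tsum_Ici_of_monotoneOn {ι X : Type*} [LinearOrder X] [TopologicalSpace X]
    [ClosedIciTopology X] [NoMaxOrder X] {a : X} {g : ι → X → ℝ}
    (hcont : ∀ i, ContinuousOn (g i) (Ici a)) (hmono : ∀ i, MonotoneOn (g i) (Ici a))
    (hsum : ∀ x ∈ Ici a, Summable fun i => g i x) :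
    ContinuousOn (fun x => ∑' i, g i x) (Ici a) := by
  intro x hx
  obtain ⟨b, hxb⟩ := exists_gt x
  have hb : b ∈ Ici a := hx.trans hxb.le
  have hbound : ∀ i, ∀ y ∈ Ico a b, ‖g i y‖ ≤ |g i a| + |g i b| := fun i y hy =>
    (abs_le_max_abs_abs (hmono i self_mem_Ici hy.1 hy.1) (hmono i hy.1 hb hy.2.le)).trans
      (max_le_add_of_nonneg (abs_nonneg _) (abs_nonneg _))
  have hIco : ContinuousOn (fun y => ∑' i, g i y) (Ico a b) :=
    continuousOn_tsum (fun i => (hcont i).mono Ico_subset_Ici_self)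
      ((hsum a self_mem_Ici).abs.add (hsum b hb).abs) hbound
  refine (hIco x ⟨hx, hxb⟩).mono_of_mem_nhdsWithin ?_
  rw [← Ici_inter_Iio]
  exact inter_mem_nhdsWithin _ (Iio_mem_nhds hxb)

theorem summable_tsum_comm_of_nonneg {ι κ : Type*} {F : ι → κ → ℝ} (hF : ∀ i k, 0 ≤ F i k)
    (hrow : ∀ i, Summable (F i)) (hsum : Summable fun i => ∑' k, F i k) :
    Summable fun k => ∑' i, F i k := by
  have hprod : Summable fun p : ι × κ => F p.1 p.2 :=
    (summable_prod_of_nonneg fun p => hF p.1 p.2).2 ⟨hrow, hsum⟩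
  exact hprod.prod_symm.prod

theorem exists_pos_summable_forall_summable_mul (D : ℕ → ℕ → ℝ) :
    ∃ c : ℕ → ℝ, (∀ j, 0 < c j) ∧ Summable c ∧ ∀ N, Summable fun j => c j * D N j := by
  let M : ℕ → ℝ := fun j => 1 + ∑ i ∈ Finset.range (j + 1), |D i j|
  have one_le_M : ∀ j, 1 ≤ M j := fun j =>
    le_add_of_nonneg_right (Finset.sum_nonneg fun i _ => abs_nonneg _)
  have M_pos : ∀ j, 0 < M j := fun j => one_pos.trans_le (one_le_M j)
  have abs_le_M : ∀ N j, N ≤ j → |D N j| ≤ M j := fun N j hNj =>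
    (Finset.single_le_sum (f := fun i => |D i j|) (fun i _ => abs_nonneg _)
      (Finset.mem_range_succ_iff.2 hNj)).trans (le_add_of_nonneg_left zero_le_one)
  have c_pos : ∀ j, 0 < (1 / 2 : ℝ) ^ j / M j := fun j => div_pos (by positivity) (M_pos j)
  refine ⟨fun j => (1 / 2) ^ j / M j, c_pos, ?_, fun N => ?_⟩
  · exact summable_geometric_two.of_nonneg_of_le (fun j => (c_pos j).le)
      fun j => div_le_self (by positivity) (one_le_M j)
  · refine summable_geometric_two.of_norm_bounded_eventually_nat ?_
    filter_upwards [eventually_ge_atTop N] with j hNj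
    calc ‖(1 / 2 : ℝ) ^ j / M j * D N j‖ = (1 / 2) ^ j / M j * |D N j| := by
          rw [norm_mul, Real.norm_of_nonneg (c_pos j).le, Real.norm_eq_abs]
      _ ≤ (1 / 2) ^ j / M j * M j := mul_le_mul_of_nonneg_left (abs_le_M N j hNj) (c_pos j).le
      _ = (1 / 2) ^ j := div_mul_cancel₀ _ (M_pos j).ne'

theorem summable_mul_posPart_sub_of_tendsto_zero {u : ℕ → ℝ} (hu : Tendsto u atTop (nhds 0))
    (w : ℕ → ℝ) {δ : ℝ} (hδ : 0 < δ) : Summable fun k => w k * (u k - δ)⁺ := by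
  refine summable_zero.of_norm_bounded_eventually_nat ?_
  filter_upwards [hu.eventually_lt_const hδ] with k hk
  rw [posPart_of_nonpos (sub_nonpos.2 hk.le), mul_zero, norm_zero]

end Series

section ComparisonFunctions

variable {α : ℝ → ℝ} {β : ℝ → ℝ → ℝ} {r : ℝ}

theorem IsKInf.monotoneOn (hα : IsKInf α) : MonotoneOn α (Ici 0) :=
  hα.2.1.monotoneOn

theorem IsKInf.map_zero (hα : IsKInf α) : α 0 = 0 :=
  hα.2.2.1

theorem IsKInf.nonneg (hα : IsKInf α) (hr : 0 ≤ r) : 0 ≤ α r :=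
  hα.map_zero.ge.trans (hα.monotoneOn self_mem_Ici hr hr)

theorem IsKL.monotoneOn (hβ : IsKL β) (k : ℕ) : MonotoneOn (fun r => β r k) (Ici 0) :=
  (hβ.2.1 k k.cast_nonneg).2.1.monotoneOn

theorem IsKL.zero_left (hβ : IsKL β) (k : ℕ) : β 0 k = 0 :=
  (hβ.2.1 k k.cast_nonneg).2.2

theorem IsKL.nonneg (hβ : IsKL β) (hr : 0 ≤ r) (k : ℕ) : 0 ≤ β r k :=
  (hβ.zero_left k).ge.trans (hβ.monotoneOn k self_mem_Ici hr hr)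

theorem IsKL.tendsto_natCast (hβ : IsKL β) (hr : 0 ≤ r) :
    Tendsto (fun k : ℕ => β r k) atTop (nhds 0) :=
  (hβ.2.2 r hr).2.comp tendsto_natCast_atTop_atTop

theorem IsKInf.comp_isKL_monotoneOn (hα : IsKInf α) (hβ : IsKL β) (k : ℕ) :
    MonotoneOn (fun r => α (β r k)) (Ici 0) :=
  hα.monotoneOn.comp (hβ.monotoneOn k) fun _ hr => hβ.nonneg hr k

theorem IsKInf.comp_isKL_continuousOn (hα : IsKInf α) (hβ : IsKL β) (k : ℕ) :
    ContinuousOn (fun r => α (β r k)) (Ici 0) :=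
  hα.1.comp (hβ.2.1 k k.cast_nonneg).1 fun _ hr => hβ.nonneg hr k

theorem isKInf_id_add {φ : ℝ → ℝ} (hcont : ContinuousOn φ (Ici 0)) (hmono : MonotoneOn φ (Ici 0))
    (hzero : φ 0 = 0) : IsKInf fun r => r + φ r := by
  refine ⟨continuousOn_id.add hcont, strictMonoOn_id.add_monotone hmono, by simp [hzero], ?_⟩
  refine tendsto_atTop_mono' atTop ?_ tendsto_id
  filter_upwards [eventually_ge_atTop 0] with r hr
  exact le_add_of_nonneg_right (hzero.ge.trans (hmono self_mem_Ici hr hr))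

theorem IsKInf.exists_orderIso_eqOn (hα : IsKInf α) : ∃ e : ℝ ≃o ℝ, EqOn e α (Ici 0) := by
  -- The extension of `α` to the negative half-line by the identity.
  let a : ℝ → ℝ := fun x => α (max x 0) + min x 0
  have a_eqOn_Ici : EqOn a α (Ici 0) := fun x hx => by
    simp only [a, max_eq_left (mem_Ici.1 hx), min_eq_right (mem_Ici.1 hx), add_zero]
  have a_eqOn_Iic : EqOn a id (Iic 0) := fun x hx => by
    simp only [a, max_eq_right (mem_Iic.1 hx), min_eq_left (mem_Iic.1 hx), hα.map_zero, zero_add,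
      id_eq]
  have a_strictMono : StrictMono a :=
    (strictMonoOn_id.congr a_eqOn_Iic.symm).Iic_union_Ici (hα.2.1.congr a_eqOn_Ici.symm)
  have a_continuous : Continuous a :=
    (hα.1.comp_continuous (by fun_prop) fun x => le_max_right x 0).add (by fun_prop)
  have a_surjective : Function.Surjective a :=
    a_continuous.surjective
      (hα.2.2.2.congr' (a_eqOn_Ici.symm.eventuallyEq_of_mem (Ici_mem_atTop 0)))
      (tendsto_id.congr' (a_eqOn_Iic.symm.eventuallyEq_of_mem (Iic_mem_atBot 0)))
  exact ⟨a_strictMono.orderIsoOfSurjective a a_surjective, a_eqOn_Ici⟩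

theorem IsKInf.isKL_orderIso_rpow_mul (hα : IsKInf α) {e : ℝ ≃o ℝ} (he : e 0 = 0) {ρ : ℝ}
    (hρ0 : 0 < ρ) (hρ1 : ρ < 1) : IsKL fun r s => e (ρ ^ s * α r) := by
  have hpow : Continuous fun s : ℝ => ρ ^ s := Real.continuous_const_rpow hρ0.ne'
  refine ⟨?_, fun s _ => ⟨?_, ?_, ?_⟩, fun r hr => ⟨?_, ?_⟩⟩
  · exact e.continuous.comp_continuousOn ((hpow.comp continuous_snd).continuousOn.mul
      (hα.1.comp continuous_fst.continuousOn fun p hp => hp.1))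
  · exact e.continuous.comp_continuousOn (continuousOn_const.mul hα.1)
  · exact fun r hr r' hr' hrr' =>
      e.strictMono (mul_lt_mul_of_pos_left (hα.2.1 hr hr' hrr') (Real.rpow_pos_of_pos hρ0 s))
  · simp only [hα.map_zero, mul_zero, he]
  · exact fun s _ s' _ hss' => e.monotone (mul_le_mul_of_nonneg_right
      (Real.rpow_le_rpow_of_exponent_ge hρ0 hρ1.le hss') (hα.nonneg hr))
  · have hlim : Tendsto (fun s : ℝ => ρ ^ s * α r) atTop (nhds 0) := by
      simpa only [zero_mul] using
        (tendsto_rpow_atTop_of_base_lt_one ρ (by linarith) hρ1).mul_const (α r)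
    simpa only [he, Function.comp_def] using (e.continuous.tendsto 0).comp hlim

end ComparisonFunctions

section RampSeries

variable {c : ℕ → ℝ}

/-- The series of ramps `∑ j, c j * (s - 1 / (j + 1))⁺`, which for positive summable weights `c` is
a class `K∞` function; a fast decaying `c` makes it as flat at `0` as desired. -/
noncomputable def rampSeries (c : ℕ → ℝ) (s : ℝ) : ℝ :=
  ∑' j : ℕ, c j * (s - 1 / (j + 1))⁺

theorem summable_rampSeries (hc : ∀ j, 0 ≤ c j) (hsum : Summable c) (s : ℝ) :
    Summable fun j : ℕ => c j * (s - 1 / (j + 1))⁺ := by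
  have ramp_le : ∀ j : ℕ, (s - 1 / ((j : ℝ) + 1))⁺ ≤ |s| := fun j =>
    sup_le ((sub_le_self s (by positivity)).trans (le_abs_self s)) (abs_nonneg s)
  exact (hsum.mul_right |s|).of_nonneg_of_le (fun j => mul_nonneg (hc j) (posPart_nonneg _))
    fun j => mul_le_mul_of_nonneg_left (ramp_le j) (hc j)

theorem monotone_mul_posPart_sub {a : ℝ} (ha : 0 ≤ a) (δ : ℝ) :
    Monotone fun s : ℝ => a * (s - δ)⁺ := fun _ _ hst =>
  mul_le_mul_of_nonneg_left (posPart_mono (sub_le_sub_right hst δ)) ha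

theorem strictMonoOn_rampSeries (hc : ∀ j, 0 < c j) (hsum : Summable c) :
    StrictMonoOn (rampSeries c) (Ici 0) := by
  intro s hs t _ hst
  obtain ⟨j, hj⟩ := exists_nat_one_div_lt (lt_of_le_of_lt (mem_Ici.1 hs) hst)
  have ramp_lt : (s - 1 / ((j : ℝ) + 1))⁺ < (t - 1 / ((j : ℝ) + 1))⁺ := by
    rw [posPart_of_nonneg (sub_nonneg.2 hj.le), posPart_lt]
    exact ⟨sub_lt_sub_right hst _, sub_pos.2 hj⟩
  exact Summable.tsum_lt_tsum (fun i => monotone_mul_posPart_sub (hc i).le _ hst.le)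
    (mul_lt_mul_of_pos_left ramp_lt (hc j)) (summable_rampSeries (fun i => (hc i).le) hsum s)
    (summable_rampSeries (fun i => (hc i).le) hsum t)

theorem tendsto_rampSeries_atTop (hc : ∀ j, 0 < c j) (hsum : Summable c) :
    Tendsto (rampSeries c) atTop atTop := by
  have first_term_le : ∀ s, c 0 * (s + -1) ≤ rampSeries c s := fun s =>
    calc c 0 * (s + -1) = c 0 * (s - 1 / ((0 : ℕ) + 1)) := by norm_num [sub_eq_add_neg]
      _ ≤ c 0 * (s - 1 / ((0 : ℕ) + 1))⁺ := mul_le_mul_of_nonneg_left (le_posPart _) (hc 0).le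
      _ ≤ rampSeries c s := (summable_rampSeries (fun j => (hc j).le) hsum s).le_tsum 0
          fun j _ => mul_nonneg (hc j).le (posPart_nonneg _)
  exact tendsto_atTop_mono first_term_le
    ((tendsto_atTop_add_const_right _ (-1) tendsto_id).const_mul_atTop (hc 0))

theorem isKInf_rampSeries (hc : ∀ j, 0 < c j) (hsum : Summable c) : IsKInf (rampSeries c) := by
  refine ⟨?_, strictMonoOn_rampSeries hc hsum, ?_, tendsto_rampSeries_atTop hc hsum⟩
  · exact continuousOn_tsum_Ici_of_monotoneOn
      (fun j => (continuous_const.mul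
        (continuous_posPart.comp (continuous_id.sub continuous_const))).continuousOn)
      (fun j => (monotone_mul_posPart_sub (hc j).le _).monotoneOn _)
      fun s _ => summable_rampSeries (fun j => (hc j).le) hsum s
  · have ramp_zero : ∀ j : ℕ, (0 - 1 / ((j : ℝ) + 1))⁺ = 0 := fun j =>
      posPart_of_nonpos (sub_nonpos.2 (by positivity))
    simp only [rampSeries, ramp_zero, mul_zero, tsum_zero]

theorem exists_isKInf_forall_summable_mul_comp {u : ℕ → ℕ → ℝ}
    (hu : ∀ N, Tendsto (u N) atTop (nhds 0)) {w : ℕ → ℝ} (hw : ∀ k, 0 ≤ w k) :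
    ∃ α, IsKInf α ∧ ∀ N, Summable fun k => w k * α (u N k) := by
  have hramp : ∀ N j : ℕ, Summable fun k => w k * (u N k - 1 / (j + 1))⁺ := fun N j =>
    summable_mul_posPart_sub_of_tendsto_zero (hu N) w Nat.one_div_pos_of_nat
  obtain ⟨c, hc, hcsum, hcD⟩ := exists_pos_summable_forall_summable_mul
    fun N j => ∑' k, w k * (u N k - 1 / (j + 1))⁺
  refine ⟨rampSeries c, isKInf_rampSeries hc hcsum, fun N => ?_⟩
  have hswap : Summable fun k => ∑' j : ℕ, c j * (w k * (u N k - 1 / (j + 1))⁺) :=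
    summable_tsum_comm_of_nonneg
      (fun j k => mul_nonneg (hc j).le (mul_nonneg (hw k) (posPart_nonneg _)))
      (fun j => (hramp N j).mul_left (c j)) (by simpa only [tsum_mul_left] using hcD N)
  simpa only [rampSeries, ← tsum_mul_left, mul_left_comm] using hswap

end RampSeries

section KLSeries

variable {α : ℝ → ℝ} {β : ℝ → ℝ → ℝ} {w : ℕ → ℝ}

theorem IsKL.exists_isKInf_summable (hβ : IsKL β) (hw : ∀ k, 0 ≤ w k) :
    ∃ α, IsKInf α ∧ ∀ r, 0 ≤ r → Summable fun k : ℕ => w k * α (β r k) := by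
  obtain ⟨α, hα, hsum⟩ := exists_isKInf_forall_summable_mul_comp
    (fun N : ℕ => hβ.tendsto_natCast N.cast_nonneg) hw
  refine ⟨α, hα, fun r hr => ?_⟩
  obtain ⟨N, hrN⟩ := exists_nat_ge r
  exact (hsum N).of_nonneg_of_le
    (fun k => mul_nonneg (hw k) (hα.nonneg (hβ.nonneg hr k)))
    fun k => mul_le_mul_of_nonneg_left
      (hα.comp_isKL_monotoneOn hβ k hr (hr.trans hrN) hrN) (hw k)

-- The summand `r` forces unboundedness: a `KL` function may be bounded in its first argument.
theorem IsKL.isKInf_id_add_tsum (hβ : IsKL β) (hα : IsKInf α) (hw : ∀ k, 0 ≤ w k)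
    (hsum : ∀ r, 0 ≤ r → Summable fun k : ℕ => w k * α (β r k)) :
    IsKInf fun r => r + ∑' k : ℕ, w k * α (β r k) := by
  have term_monotoneOn : ∀ k : ℕ, MonotoneOn (fun r => w k * α (β r k)) (Ici 0) :=
    fun k r hr r' hr' hrr' =>
      mul_le_mul_of_nonneg_left (hα.comp_isKL_monotoneOn hβ k hr hr' hrr') (hw k)
  refine isKInf_id_add ?_ (fun r hr r' hr' hrr' => ?_) ?_
  · exact continuousOn_tsum_Ici_of_monotoneOn
      (fun k => continuousOn_const.mul (hα.comp_isKL_continuousOn hβ k)) term_monotoneOn hsum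
  · exact (hsum r hr).tsum_le_tsum (fun k => term_monotoneOn k hr hr' hrr') (hsum r' hr')
  · simp only [hβ.zero_left, hα.map_zero, mul_zero, tsum_zero]

end KLSeries

section Autonomous

variable {X : Type*} {g : X → X} {size : X → ℝ} {S : Set X}

/-- The weighted sum `∑ k, c ^ k * φ (g^[k] x)` of `φ` along the orbit of `x` under `g`: the
Lyapunov function of the converse theorem, with decay rate `c⁻¹`. -/
noncomputable def orbitSum (c : ℝ) (g : X → X) (φ : X → ℝ) (x : X) : ℝ :=
  ∑' k : ℕ, c ^ k * φ (g^[k] x)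

theorem orbitSum_eq_add {c : ℝ} {φ : X → ℝ} {x : X}
    (hsum : Summable fun k : ℕ => c ^ k * φ (g^[k] x)) :
    orbitSum c g φ x = φ x + c * orbitSum c g φ (g x) := by
  simp only [orbitSum, hsum.tsum_eq_zero_add, pow_zero, Function.iterate_zero_apply, one_mul,
    pow_succ', Function.iterate_succ_apply, mul_assoc, tsum_mul_left]

/-- `V` is a Lyapunov function on `S` for `x ↦ g x`, with comparison functions `α₁`, `α₂` and decay
rate `γ`, where `size x` measures the distance of the state `x` to the attractor. -/
structure IsLyapunovOn (g : X → X) (size : X → ℝ) (S : Set X) (α₁ α₂ : ℝ → ℝ) (γ : ℝ)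
    (V : X → ℝ) : Prop where
  lower_bound : ∀ x ∈ S, α₁ (size x) ≤ V x
  upper_bound : ∀ x ∈ S, V x ≤ α₂ (size x)
  decay : ∀ x ∈ S, V (g x) ≤ γ * V x

theorem exists_isLyapunovOn_of_isKL_bound (hsize : ∀ x, 0 ≤ size x) {β : ℝ → ℝ → ℝ} (hβ : IsKL β)
    (hbound : ∀ k : ℕ, ∀ x ∈ S, size (g^[k] x) ≤ β (size x) k) {γ : ℝ} (hγ : 0 < γ) :
    ∃ V α₁ α₂, IsKInf α₁ ∧ IsKInf α₂ ∧ IsLyapunovOn g size S α₁ α₂ γ V := by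
  have weight_nonneg : ∀ k : ℕ, 0 ≤ γ⁻¹ ^ k := fun k => by positivity
  obtain ⟨α, hα, hβsum⟩ := hβ.exists_isKInf_summable weight_nonneg
  have term_nonneg : ∀ x (k : ℕ), 0 ≤ γ⁻¹ ^ k * α (size (g^[k] x)) := fun x k =>
    mul_nonneg (weight_nonneg k) (hα.nonneg (hsize _))
  have term_le : ∀ x ∈ S, ∀ k : ℕ, γ⁻¹ ^ k * α (size (g^[k] x)) ≤ γ⁻¹ ^ k * α (β (size x) k) :=
    fun x hx k => mul_le_mul_of_nonneg_left
      (hα.monotoneOn (hsize _) (hβ.nonneg (hsize x) k) (hbound k x hx)) (weight_nonneg k)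
  have hsum : ∀ x ∈ S, Summable fun k : ℕ => γ⁻¹ ^ k * α (size (g^[k] x)) := fun x hx =>
    (hβsum _ (hsize x)).of_nonneg_of_le (term_nonneg x) (term_le x hx)
  refine ⟨orbitSum γ⁻¹ g (α ∘ size), α, fun r => r + ∑' k : ℕ, γ⁻¹ ^ k * α (β r k), hα,
    hβ.isKInf_id_add_tsum hα weight_nonneg hβsum, fun x hx => ?_, fun x hx => ?_, fun x hx => ?_⟩
  · simpa only [orbitSum, Function.comp_apply, pow_zero, one_mul, Function.iterate_zero_apply]
      using (hsum x hx).le_tsum 0 fun k _ => term_nonneg x k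
  · exact ((hsum x hx).tsum_le_tsum (term_le x hx) (hβsum _ (hsize x))).trans
      (le_add_of_nonneg_left (hsize x))
  · rw [← inv_mul_le_iff₀ hγ, orbitSum_eq_add (φ := α ∘ size) (hsum x hx)]
    exact le_add_of_nonneg_left (hα.nonneg (hsize x))

theorem IsLyapunovOn.iterate_le {α₁ α₂ : ℝ → ℝ} {γ : ℝ} {V : X → ℝ}
    (hV : IsLyapunovOn g size S α₁ α₂ γ V) (hS : MapsTo g S S) (hγ : 0 ≤ γ) {x : X} (hx : x ∈ S)
    (k : ℕ) : V (g^[k] x) ≤ γ ^ k * V x :=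
  le_geom (u := fun k => V (g^[k] x)) hγ k fun i _ => by
    simpa only [Function.iterate_succ_apply'] using hV.decay _ (hS.iterate i hx)

theorem IsLyapunovOn.exists_isKL_bound {α₁ α₂ : ℝ → ℝ} {γ : ℝ} {V : X → ℝ}
    (hV : IsLyapunovOn g size S α₁ α₂ γ V) (hS : MapsTo g S S) (hsize : ∀ x, 0 ≤ size x)
    (hα₁ : IsKInf α₁) (hα₂ : IsKInf α₂) (hγ : γ ∈ Ico (0 : ℝ) 1) :
    ∃ β, IsKL β ∧ ∀ k : ℕ, ∀ x ∈ S, size (g^[k] x) ≤ β (size x) k := by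
  -- `γ = 0` is excluded as the base of the power by passing to a larger rate.
  obtain ⟨ρ, hγρ, hρ1⟩ := exists_between hγ.2
  obtain ⟨e, he⟩ := hα₁.exists_orderIso_eqOn
  have he0 : e.symm 0 = 0 := by
    rw [e.symm_apply_eq, he self_mem_Ici, hα₁.map_zero]
  refine ⟨fun r s => e.symm (ρ ^ s * α₂ r),
    hα₂.isKL_orderIso_rpow_mul he0 (hγ.1.trans_lt hγρ) hρ1, fun k x hx => ?_⟩
  rw [e.le_symm_apply, Real.rpow_natCast]
  calc e (size (g^[k] x)) = α₁ (size (g^[k] x)) := he (hsize _)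
    _ ≤ V (g^[k] x) := hV.lower_bound _ (hS.iterate k hx)
    _ ≤ γ ^ k * V x := hV.iterate_le hS hγ.1 hx k
    _ ≤ γ ^ k * α₂ (size x) :=
      mul_le_mul_of_nonneg_left (hV.upper_bound x hx) (pow_nonneg hγ.1 k)
    _ ≤ ρ ^ k * α₂ (size x) :=
      mul_le_mul_of_nonneg_right (pow_le_pow_left₀ hγ.1 hγρ.le k) (hα₂.nonneg (hsize x))

end Autonomous

section Driven

/-- The skew product of a system `f` driven by the base dynamics `T`: the autonomous system on pairs
of a state and a driving signal. -/
def skewProduct {E Ω : Type*} (T : Ω → Ω) (f : E → Ω → E) (p : E × Ω) : E × Ω :=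
  (f p.1 p.2, T p.2)

theorem skewProduct_shiftMap_iterate {A : Type*} {n : ℕ}
    (f : (Fin n → ℝ) → (ℤ → A) → Fin n → ℝ) (x : Fin n → ℝ) (z : ℤ → A) (k : ℕ) :
    (skewProduct shiftMap f)^[k] (x, z) = (sol f x z k, shiftMap^[k] z) := by
  induction k with
  | zero => rfl
  | succ k ih => rw [Function.iterate_succ_apply', ih, Function.iterate_succ_apply']; rfl

theorem IsSofic.mapsTo_shiftMap {A : Type*} {Z : Set (ℤ → A)} (hZ : IsSofic Z) :
    MapsTo shiftMap Z Z := by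
  obtain ⟨S, _, E, rfl⟩ := hZ
  rintro z ⟨s, hs⟩
  exact ⟨fun k => s (k + 1), fun k => hs (k + 1)⟩

theorem guas_iff_exists_sequence_dependent_lyapunov_general {E Ω : Type*} [SeminormedAddGroup E]
    {T : Ω → Ω} {Z : Set Ω} (hZ : MapsTo T Z Z) (f : E → Ω → E) :
    (∃ β : ℝ → ℝ → ℝ, IsKL β ∧
      ∀ (k : ℕ) (x : E) (z : Ω), z ∈ Z → ‖((skewProduct T f)^[k] (x, z)).1‖ ≤ β ‖x‖ k) ↔
    (∃ (V : E → Ω → ℝ) (α₁ α₂ : ℝ → ℝ) (γ : ℝ),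
      IsKInf α₁ ∧ IsKInf α₂ ∧ γ ∈ Ico (0 : ℝ) 1 ∧
      (∀ (x : E) (z : Ω), z ∈ Z → α₁ ‖x‖ ≤ V x z ∧ V x z ≤ α₂ ‖x‖) ∧
      (∀ (x : E) (z : Ω), z ∈ Z → V (f x z) (T z) ≤ γ * V x z)) := by
  have hnorm : ∀ p : E × Ω, 0 ≤ ‖p.1‖ := fun p => norm_nonneg p.1
  constructor
  · rintro ⟨β, hβ, hbound⟩
    obtain ⟨V, α₁, α₂, hα₁, hα₂, hV⟩ := exists_isLyapunovOn_of_isKL_bound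
      (S := Prod.snd ⁻¹' Z) hnorm hβ (fun k p hp => hbound k p.1 p.2 hp) one_half_pos
    exact ⟨fun x z => V (x, z), α₁, α₂, 1 / 2, hα₁, hα₂, ⟨one_half_pos.le, one_half_lt_one⟩,
      fun x z hz => ⟨hV.lower_bound (x, z) hz, hV.upper_bound (x, z) hz⟩,
      fun x z hz => hV.decay (x, z) hz⟩
  · rintro ⟨V, α₁, α₂, γ, hα₁, hα₂, hγ, hbounds, hdecay⟩
    have hV : IsLyapunovOn (skewProduct T f) (fun p => ‖p.1‖) (Prod.snd ⁻¹' Z) α₁ α₂ γ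
        fun p => V p.1 p.2 :=
      ⟨fun p hp => (hbounds p.1 p.2 hp).1, fun p hp => (hbounds p.1 p.2 hp).2,
        fun p hp => hdecay p.1 p.2 hp⟩
    obtain ⟨β, hβ, hbound⟩ :=
      hV.exists_isKL_bound (fun p hp => hZ hp) hnorm hα₁ hα₂ hγ
    exact ⟨β, hβ, fun k x z hz => hbound k (x, z) hz⟩

end Driven

/-- Theorem (Converse Lyapunov result, nonlinear case): the system `x(k+1) = f(x(k), σ^k z)`
over the sofic shift `Z` is GUAS iff it admits a sequence-dependent Lyapunov function. -/
theorem guas_iff_exists_sequence_dependent_lyapunov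
    {A : Type*} [Fintype A] {n : ℕ} (Z : Set (ℤ → A)) (hZ : IsSofic Z)
    (f : (Fin n → ℝ) → (ℤ → A) → Fin n → ℝ) :
    (∃ β : ℝ → ℝ → ℝ, IsKL β ∧
      ∀ (k : ℕ) (x0 : Fin n → ℝ) (z : ℤ → A), z ∈ Z →
        ‖sol f x0 z k‖ ≤ β ‖x0‖ (k : ℝ)) ↔
    (∃ (V : (Fin n → ℝ) → (ℤ → A) → ℝ) (α₁ α₂ : ℝ → ℝ) (γ : ℝ),
      IsKInf α₁ ∧ IsKInf α₂ ∧ γ ∈ Set.Ico (0 : ℝ) 1 ∧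
      (∀ (x : Fin n → ℝ) (z : ℤ → A), z ∈ Z → α₁ ‖x‖ ≤ V x z ∧ V x z ≤ α₂ ‖x‖) ∧
      (∀ (x : Fin n → ℝ) (z : ℤ → A), z ∈ Z →
        V (f x z) (shiftMap z) ≤ γ * V x z)) := by
  simpa only [skewProduct_shiftMap_iterate] using
    guas_iff_exists_sequence_dependent_lyapunov_general hZ.mapsTo_shiftMap f
end

section
/- Let C = {C_1, …, C_K} be a g-covering of a sofic shift Z with presentation G, let f : ℝ^n × Z → ℝ^n, and let W : ℝ^n × C → ℝ be a G-based Lyapunov function for the system x(k+1) = f(x(k), σ^k(z)), with class-K∞ bounds α₁, α₂ and rate γ ∈ [0,1). Then the function V_min : ℝ^n × Z → ℝ defined by V_min(x, z) := min{ W(x, X) : X ∈ C, z ∈ X } is a sequence-dependent Lyapunov function for the system, i.e. α₁(|x|) ≤ V_min(x, z) ≤ α₂(|x|) for all x, z, and V_min(f(x,z), σ(z)) ≤ γ V_min(x, z) for all x ∈ ℝ^n and z ∈ Z. -/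
open Set Filter Matrix

/-! Take a walk labelled by `z` that starts at a node `s`. Its first edge `(s, t, z 0)` leads to a
node `t` whose cell contains `σ z`, so `W (f x z) t ≤ γ * W x s`, and the left side bounds the
infimum at `(f x z, σ z)` from above. Multiplication by `γ ≥ 0` commutes with infima,
so the decrease follows by taking the infimum over all `s` whose cell contains `z`. -/

section LabeledWalk

variable {S A : Type*} {E : Set (S × S × A)} {z : ℤ → A}

theorem IsLabeledWalk.shiftMap {w : ℤ → S} (hw : IsLabeledWalk E z w) :
    IsLabeledWalk E (shiftMap z) (shiftMap w) :=
  fun k => hw (k + 1)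

theorem mem_graphLang_iff_exists_mem_graphLangAt :
    z ∈ graphLang E ↔ ∃ s, z ∈ graphLangAt E s :=
  ⟨fun ⟨w, hw⟩ => ⟨w 0, w, hw, rfl⟩, fun ⟨_, w, hw, _⟩ => ⟨w, hw⟩⟩

theorem exists_edge_shiftMap_mem_graphLangAt {s : S} (hz : z ∈ graphLangAt E s) :
    ∃ t, (s, t, z 0) ∈ E ∧ shiftMap z ∈ graphLangAt E t := by
  obtain ⟨w, hw, rfl⟩ := hz
  exact ⟨w (0 + 1), hw 0, shiftMap w, hw.shiftMap, rfl⟩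

end LabeledWalk

section MinLyapunov

variable {X S A : Type*}

/-- The function `V_min` of a family of cells `C` and a function `W` of a state and a cell: the
infimum of `W x j` over the cells `C j` containing `z`, a minimum when these are finite in number.
It takes the junk value `0` when `z` lies in no cell or when the values are unbounded
below. -/
noncomputable def minLyapunov (C : S → Set (ℤ → A)) (W : X → S → ℝ) (x : X) (z : ℤ → A) : ℝ :=
  sInf {r : ℝ | ∃ j, z ∈ C j ∧ r = W x j}

variable {C : S → Set (ℤ → A)} {W : X → S → ℝ} {x : X} {z : ℤ → A}

theorem le_minLyapunov {c : ℝ} (hz : ∃ j, z ∈ C j) (hc : ∀ j, z ∈ C j → c ≤ W x j) :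
    c ≤ minLyapunov C W x z := by
  obtain ⟨j, hj⟩ := hz
  refine le_csInf ⟨W x j, j, hj, rfl⟩ ?_
  rintro _ ⟨i, hi, rfl⟩
  exact hc i hi

theorem minLyapunov_le {j : S} (hW : BddBelow (range (W x))) (hj : z ∈ C j) :
    minLyapunov C W x z ≤ W x j := by
  refine csInf_le (hW.mono ?_) ⟨j, hj, rfl⟩
  rintro _ ⟨i, -, rfl⟩
  exact mem_range_self i

theorem minLyapunov_const_mul {γ : ℝ} (hγ : 0 ≤ γ) :
    minLyapunov C (fun x j => γ * W x j) x z = γ * minLyapunov C W x z := by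
  rw [minLyapunov, minLyapunov, ← smul_eq_mul, ← Real.sInf_smul_of_nonneg hγ]
  congr 1
  ext r
  simp only [mem_smul_set, mem_ofPred_eq, smul_eq_mul]
  aesop

end MinLyapunov

theorem gBased_lyapunov_min_is_sequence_dependent_lyapunov_general
    {X S A : Type*} (E : Set (S × S × A)) (f : X → (ℤ → A) → X) (W : X → S → ℝ)
    (lower upper : X → ℝ) {γ : ℝ} (hγ : 0 ≤ γ)
    (hbd : ∀ x s, lower x ≤ W x s ∧ W x s ≤ upper x)
    (hdec : ∀ x s t z, (s, t, z 0) ∈ E → z ∈ graphLangAt E s → shiftMap z ∈ graphLangAt E t →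
      W (f x z) t ≤ γ * W x s) :
    (∀ x, ∀ z ∈ graphLang E, lower x ≤ minLyapunov (graphLangAt E) W x z ∧
      minLyapunov (graphLangAt E) W x z ≤ upper x) ∧
    (∀ x, ∀ z ∈ graphLang E, minLyapunov (graphLangAt E) W (f x z) (shiftMap z) ≤
      γ * minLyapunov (graphLangAt E) W x z) := by
  have bddBelow_W (x : X) : BddBelow (range (W x)) :=
    ⟨lower x, forall_mem_range.2 fun s => (hbd x s).1⟩
  refine ⟨fun x z hz => ?_, fun x z hz => ?_⟩ <;>
    rw [mem_graphLang_iff_exists_mem_graphLangAt] at hz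
  · refine ⟨le_minLyapunov hz fun s _ => (hbd x s).1, ?_⟩
    obtain ⟨s, hs⟩ := hz
    exact (minLyapunov_le (bddBelow_W x) hs).trans (hbd x s).2
  · rw [← minLyapunov_const_mul hγ]
    refine le_minLyapunov hz fun s hs => ?_
    obtain ⟨t, hedge, ht⟩ := exists_edge_shiftMap_mem_graphLangAt hs
    calc minLyapunov (graphLangAt E) W (f x z) (shiftMap z)
        ≤ W (f x z) t := minLyapunov_le (bddBelow_W (f x z)) ht
      _ ≤ γ * W x s := hdec x s t z hedge hs ht

/-- Theorem: if `W` is a `G`-based Lyapunov function for the system `x(k+1) = f(x(k), σ^k z)`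
(with g-covering `C` presented by the graph with edge set `E`), then
`V_min(x, z) = min { W(x, X) : X ∈ C, z ∈ X }` is a sequence-dependent Lyapunov function. -/
theorem gBased_lyapunov_min_is_sequence_dependent_lyapunov
    {A : Type*} [Fintype A] {n K : ℕ} (Z : Set (ℤ → A))
    (C : Fin K → Set (ℤ → A)) (E : Set (Fin K × Fin K × A))
    (hpres : IsPresentation E C Z)
    (f : (Fin n → ℝ) → (ℤ → A) → Fin n → ℝ)
    (W : (Fin n → ℝ) → Fin K → ℝ) (α₁ α₂ : ℝ → ℝ) (γ : ℝ)
    (hα₁ : IsKInf α₁) (hα₂ : IsKInf α₂) (hγ : γ ∈ Set.Ico (0 : ℝ) 1)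
    (hbd : ∀ (x : Fin n → ℝ) (j : Fin K), α₁ ‖x‖ ≤ W x j ∧ W x j ≤ α₂ ‖x‖)
    (hdec : ∀ (x : Fin n → ℝ) (j j' : Fin K) (i : A) (z : ℤ → A),
      (j, j', i) ∈ E → z ∈ C j → z 0 = i → shiftMap z ∈ C j' →
      W (f x z) j' ≤ γ * W x j) :
    (∀ (x : Fin n → ℝ) (z : ℤ → A), z ∈ Z →
      α₁ ‖x‖ ≤ sInf {r : ℝ | ∃ j : Fin K, z ∈ C j ∧ r = W x j} ∧
      sInf {r : ℝ | ∃ j : Fin K, z ∈ C j ∧ r = W x j} ≤ α₂ ‖x‖) ∧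
    (∀ (x : Fin n → ℝ) (z : ℤ → A), z ∈ Z →
      sInf {r : ℝ | ∃ j : Fin K, shiftMap z ∈ C j ∧ r = W (f x z) j} ≤
        γ * sInf {r : ℝ | ∃ j : Fin K, z ∈ C j ∧ r = W x j}) := by
  obtain ⟨rfl, hC⟩ := hpres
  obtain rfl : C = graphLangAt E := funext hC
  exact gBased_lyapunov_min_is_sequence_dependent_lyapunov_general E f W
    (fun x => α₁ ‖x‖) (fun x => α₂ ‖x‖) hγ.1 hbd
    fun x s t z hedge hs ht => hdec x s t (z 0) z hedge hs rfl ht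
end

section
/- Let Z ⊆ Σ^ℤ be a sofic shift, f : ℝ^n × Σ → ℝ^n a switched vector field (the dynamics F(x, z) = f(x, z_0) depends only on the current symbol), and let C = {C_1, …, C_K} be any g-covering of Z with presentation G. Then the system x(k+1) = f(x(k), z_k) is globally uniformly asymptotically stable over Z if and only if there exists a G-based Lyapunov function for it, i.e. W : ℝ^n × C → ℝ, α₁, α₂ of class K∞ and γ ∈ [0,1) with α₁(|x|) ≤ W(x, C) ≤ α₂(|x|) for all x, C, and W(f(x, i), D) ≤ γ W(x, C) for all x ∈ ℝ^n and all C, D ∈ C, i ∈ Σ such that (s_C, s_D, i) ∈ E and there exists z ∈ C with z_0 = i and σ(z) ∈ D. -/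
open Set Filter Matrix

/-!
If `W` is a `G`-based Lyapunov function, then along any walk `s` of the graph labeled by `z` the
values `W (x k) (s k)` decay geometrically, and inverting the lower bound `α₁` turns this into a
`KL` bound.

Conversely, by Sontag's lemma a `KL` bound `β` can be rescaled to exponential decay:
`α (β r t) ≤ exp (-t) * ρ r` with `α`, `ρ` of class `K∞`. Put at node `j` the supremum of
`exp k * α ‖x k‖` over all times `k` and all trajectories driven by the forward parts of
`Z(G, j)`. Following an edge labeled `i` from `j` to `j'` consumes one step: a forward sequence
from `j'` preceded by `i` is a forward sequence from `j`, because any past of `j` can be glued to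
any future of `j'` across the edge. Hence the supremum drops by the factor `exp (-1)`.
-/

open scoped Topology NNReal

section ComparisonFunctions

namespace IsKInf

variable {α : ℝ → ℝ}

lemma mono (hα : IsKInf α) {s t : ℝ} (hs : 0 ≤ s) (hst : s ≤ t) : α s ≤ α t :=
  hα.2.1.monotoneOn hs (hs.trans hst) hst

lemma nonneg_s7 (hα : IsKInf α) {s : ℝ} (hs : 0 ≤ s) : 0 ≤ α s :=
  hα.2.2.1.symm.trans_le (hα.mono le_rfl hs)

lemma add {ρ : ℝ → ℝ} (hα : IsKInf α) (hρ : IsKInf ρ) : IsKInf (α + ρ) := by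
  obtain ⟨hα_cont, hα_mono, hα_zero, hα_top⟩ := hα
  obtain ⟨hρ_cont, hρ_mono, hρ_zero, hρ_top⟩ := hρ
  exact ⟨hα_cont.add hρ_cont, hα_mono.add hρ_mono, by simp [hα_zero, hρ_zero],
    hα_top.atTop_add_atTop hρ_top⟩

lemma exists_orderIso_eqOn_s7 (hα : IsKInf α) : ∃ e : ℝ ≃o ℝ, EqOn e α (Ici 0) := by
  obtain ⟨hcont, hmono, hzero, htop⟩ := hα
  let g : ℝ → ℝ := fun s => α (max s 0) + min s 0
  have hg_nonneg : ∀ s, 0 ≤ s → g s = α s := fun s hs => by simp [g, hs]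
  have hg_nonpos : ∀ s, s ≤ 0 → g s = s := fun s hs => by simp [g, hs, hzero]
  have hg_cont : Continuous g :=
    (hcont.comp_continuous (by fun_prop) fun s => le_max_right s 0).add (by fun_prop)
  have hg_mono : StrictMono g := by
    rw [← strictMonoOn_univ, ← Iic_union_Ici (a := (0 : ℝ))]
    exact (strictMonoOn_id.congr fun s hs => (hg_nonpos s hs).symm).union
      (hmono.congr fun s hs => (hg_nonneg s hs).symm) isGreatest_Iic isLeast_Ici
  have hg_surj : Function.Surjective g :=
    hg_cont.surjective
      (htop.congr' <| (eventually_ge_atTop 0).mono fun s hs => (hg_nonneg s hs).symm)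
      (tendsto_id.congr' <| (eventually_le_atBot 0).mono fun s hs => (hg_nonpos s hs).symm)
  exact ⟨hg_mono.orderIsoOfSurjective g hg_surj, hg_nonneg⟩

end IsKInf

lemma isKInf_integral_of_monotone {b : ℝ → ℝ} (hb : Monotone b) (hpos : ∀ s, 0 < s → 0 < b s) :
    IsKInf fun s => ∫ x in (0 : ℝ)..s, b x := by
  have hint : ∀ u v : ℝ, IntervalIntegrable b MeasureTheory.volume u v :=
    fun _ _ => hb.intervalIntegrable
  have hadd : ∀ u v : ℝ, ∫ x in (0 : ℝ)..v, b x = (∫ x in (0 : ℝ)..u, b x) + ∫ x in u..v, b x :=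
    fun u v => (intervalIntegral.integral_add_adjacent_intervals (hint 0 u) (hint u v)).symm
  have hint_pos : ∀ s t, 0 ≤ s → s < t → 0 < ∫ x in s..t, b x := fun s t hs hst =>
    intervalIntegral.intervalIntegral_pos_of_pos_on (hint s t)
      (fun x hx => hpos x (hs.trans_lt hx.1)) hst
  have hlower : ∀ s, 1 ≤ s → (s - 1) * b 1 ≤ ∫ x in (0 : ℝ)..s, b x := by
    intro s hs
    calc (s - 1) * b 1 = ∫ _ in (1 : ℝ)..s, b 1 := by simp
      _ ≤ ∫ x in (1 : ℝ)..s, b x :=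
        intervalIntegral.integral_mono_on hs (by simp) (hint 1 s) fun x hx => hb hx.1
      _ ≤ (∫ x in (0 : ℝ)..1, b x) + ∫ x in (1 : ℝ)..s, b x :=
        le_add_of_nonneg_left (hint_pos 0 1 le_rfl one_pos).le
      _ = ∫ x in (0 : ℝ)..s, b x := (hadd 1 s).symm
  refine ⟨?_, ?_, intervalIntegral.integral_same, ?_⟩
  · exact (intervalIntegral.continuous_primitive hint 0).continuousOn
  · intro s hs t _ hst
    simpa only [hadd s t, lt_add_iff_pos_right] using hint_pos s t hs hst
  · refine tendsto_atTop_mono' _ ((eventually_ge_atTop 1).mono hlower) ?_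
    exact (tendsto_atTop_add_const_right _ (-1) tendsto_id).atTop_mul_const (hpos 1 one_pos)

lemma exists_isKInf_le_mul {a : ℝ → ℝ} (ha : MonotoneOn a (Ioi 0))
    (hpos : ∀ s, 0 < s → 0 < a s) : ∃ α, IsKInf α ∧ ∀ s, 0 < s → α s ≤ s * a s := by
  let b : ℝ → ℝ := (Ioi 0).indicator a
  have hb_eq : ∀ s, 0 < s → b s = a s := fun s hs => indicator_of_mem (mem_Ioi.2 hs) a
  have hb_nonneg : ∀ s, 0 ≤ b s := indicator_nonneg fun s hs => (hpos s hs).le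
  have hb_mono : Monotone b := by
    intro s t hst
    rcases le_or_gt s 0 with hs | hs
    · exact (indicator_of_notMem (notMem_Ioi.2 hs) a).trans_le (hb_nonneg t)
    · rw [hb_eq s hs, hb_eq t (hs.trans_le hst)]
      exact ha hs (hs.trans_le hst) hst
  refine ⟨fun s => ∫ x in (0 : ℝ)..s, b x,
    isKInf_integral_of_monotone hb_mono fun s hs => (hpos s hs).trans_eq (hb_eq s hs).symm, ?_⟩
  intro s hs
  calc ∫ x in (0 : ℝ)..s, b x ≤ ∫ _ in (0 : ℝ)..s, b s :=
        intervalIntegral.integral_mono_on hs.le hb_mono.intervalIntegrable (by simp)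
          fun x hx => hb_mono hx.2
    _ = s * a s := by simp [hb_eq s hs]

lemma continuous_integral_comp_mul_of_monotone {U : ℝ → ℝ} (hU : Monotone U)
    (hU0 : ContinuousAt U 0) (a b : ℝ) : Continuous fun s => ∫ t in a..b, U (s * t) := by
  refine continuous_iff_continuousAt.2 fun s => ?_
  let M : ℝ := (|s| + 1) * max |a| |b|
  refine intervalIntegral.continuousAt_of_dominated_interval
    (bound := fun _ => max |U M| |U (-M)|) ?_ ?_ (by simp) ?_
  · exact Eventually.of_forall fun x =>
      (hU.measurable.comp (measurable_const_mul x)).aestronglyMeasurable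
  · have hnear : ∀ᶠ x in 𝓝 s, |x| < |s| + 1 :=
      continuous_abs.continuousAt.eventually_lt_const (lt_add_one |s|)
    filter_upwards [hnear] with x hx
    refine Eventually.of_forall fun t ht => ?_
    have ht' : |t| ≤ max |a| |b| := by
      rcases mem_uIcc.1 (uIoc_subset_uIcc ht) with ⟨hat, htb⟩ | ⟨hbt, hta⟩
      · exact abs_le_max_abs_abs hat htb
      · exact (abs_le_max_abs_abs hbt hta).trans_eq (max_comm _ _)
    have hxt : |x * t| ≤ M :=
      (abs_mul x t).trans_le (mul_le_mul hx.le ht' (abs_nonneg t) (by positivity))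
    obtain ⟨hl, hr⟩ := abs_le.1 hxt
    exact (abs_le_max_abs_abs (hU hl) (hU hr)).trans_eq (max_comm _ _)
  · -- A monotone function has only countably many discontinuities.
    rcases eq_or_ne s 0 with rfl | hs
    · refine Eventually.of_forall fun t _ => ?_
      exact ContinuousAt.comp' (by simpa using hU0) (by fun_prop)
    · have hcount : {t | ¬ContinuousAt U (s * t)}.Countable :=
        hU.countable_not_continuousAt.preimage (mul_right_injective₀ hs)
      filter_upwards [hcount.ae_notMem _] with t ht _
      exact ContinuousAt.comp' (not_not.1 ht) (by fun_prop)

lemma exists_isKInf_ge_of_monotoneOn {V : ℝ → ℝ} (hV : MonotoneOn V (Ici 0)) (hV0 : V 0 = 0)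
    (hcont : ContinuousWithinAt V (Ici 0) 0) : ∃ ρ, IsKInf ρ ∧ ∀ s, 0 ≤ s → V s ≤ ρ s := by
  let U : ℝ → ℝ := fun s => V (max s 0)
  have hU_eq : ∀ s, 0 ≤ s → U s = V s := fun s hs => by simp [U, hs]
  have hU : Monotone U := fun s t hst =>
    hV (le_max_right s 0) (le_max_right t 0) (max_le_max_right 0 hst)
  have hU0 : ContinuousAt U 0 := by
    have hmax : Tendsto (fun s : ℝ => max s 0) (𝓝 0) (𝓝[≥] 0) :=
      tendsto_nhdsWithin_iff.2 ⟨(continuous_id.max continuous_const).tendsto' 0 0 (max_self 0),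
        Eventually.of_forall fun s => le_max_right s 0⟩
    simpa only [ContinuousAt, U, max_self, Function.comp_def] using hcont.tendsto.comp hmax
  -- Averaging over `[s, 2 * s]` makes `V` continuous without decreasing it.
  let P : ℝ → ℝ := fun s => ∫ t in (1 : ℝ)..2, U (s * t)
  have hint : ∀ s, 0 ≤ s → IntervalIntegrable (fun t => U (s * t)) MeasureTheory.volume 1 2 :=
    fun s hs => (hU.comp (monotone_mul_left_of_nonneg hs)).intervalIntegrable
  have hP_mono : MonotoneOn P (Ici 0) := fun s hs t ht hst =>
    intervalIntegral.integral_mono_on one_le_two (hint s hs) (hint t ht) fun x hx =>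
      hU (mul_le_mul_of_nonneg_right hst (zero_le_one.trans hx.1))
  have hP_zero : P 0 = 0 := by simp [P, hU_eq, hV0]
  have hV_le : ∀ s, 0 ≤ s → V s ≤ P s := by
    intro s hs
    calc V s = ∫ _ in (1 : ℝ)..2, U s := by norm_num [hU_eq s hs]
      _ ≤ P s := intervalIntegral.integral_mono_on one_le_two (by simp) (hint s hs) fun x hx =>
        hU (le_mul_of_one_le_right hs hx.1)
  refine ⟨fun s => P s + s, ⟨?_, ?_, by simp [hP_zero], ?_⟩, fun s hs => ?_⟩
  · exact ((continuous_integral_comp_mul_of_monotone hU hU0 1 2).add continuous_id).continuousOn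
  · exact hP_mono.add_strictMono strictMonoOn_id
  · refine tendsto_atTop_mono' _ ((eventually_ge_atTop 0).mono fun s hs => ?_) tendsto_id
    exact le_add_of_nonneg_left (hP_zero.symm.trans_le (hP_mono self_mem_Ici hs hs))
  · exact (hV_le s hs).trans (le_add_of_nonneg_right hs)

namespace IsKL

variable {β : ℝ → ℝ → ℝ}

lemma map_zero (hβ : IsKL β) {t : ℝ} (ht : 0 ≤ t) : β 0 t = 0 :=
  (hβ.2.1 t ht).2.2

lemma continuousOn_left (hβ : IsKL β) {t : ℝ} (ht : 0 ≤ t) : ContinuousOn (β · t) (Ici 0) :=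
  (hβ.2.1 t ht).1

lemma mono_left (hβ : IsKL β) {r r' t : ℝ} (hr : 0 ≤ r) (hrr' : r ≤ r') (ht : 0 ≤ t) :
    β r t ≤ β r' t :=
  (hβ.2.1 t ht).2.1.monotoneOn hr (hr.trans hrr') hrr'

lemma anti_right (hβ : IsKL β) {r t t' : ℝ} (hr : 0 ≤ r) (ht : 0 ≤ t) (htt' : t ≤ t') :
    β r t' ≤ β r t :=
  (hβ.2.2 r hr).1 ht (ht.trans htt') htt'

lemma tendsto_zero (hβ : IsKL β) {r : ℝ} (hr : 0 ≤ r) : Tendsto (β r) atTop (𝓝 0) :=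
  (hβ.2.2 r hr).2

lemma nonneg_s7 (hβ : IsKL β) {r t : ℝ} (hr : 0 ≤ r) (ht : 0 ≤ t) : 0 ≤ β r t :=
  (hβ.map_zero ht).symm.trans_le (hβ.mono_left le_rfl hr ht)

lemma pos (hβ : IsKL β) {r t : ℝ} (hr : 0 < r) (ht : 0 ≤ t) : 0 < β r t :=
  (hβ.map_zero ht).symm.trans_lt ((hβ.2.1 t ht).2.1 self_mem_Ici hr.le hr)

end IsKL

/-- The last time at which the bound `β` from the initial size `s⁻¹` is still at least `s`, used
to build a `K∞` function that tames `β`. As `s → 0` the initial size `s⁻¹` exceeds any fixed `r`,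
so this single function of `s` controls the decay from every initial size. It is `0` when there is
no such time. -/
noncomputable def settlingTime (β : ℝ → ℝ → ℝ) (s : ℝ) : ℝ :=
  sSup {t | 0 ≤ t ∧ s ≤ β s⁻¹ t}

namespace IsKL

variable {β : ℝ → ℝ → ℝ}

lemma le_settlingTime (hβ : IsKL β) {s t : ℝ} (hs : 0 < s) (ht : 0 ≤ t) (hst : s ≤ β s⁻¹ t) :
    t ≤ settlingTime β s := by
  obtain ⟨T, hT⟩ := eventually_atTop.1
    ((hβ.tendsto_zero (inv_pos.2 hs).le).eventually_lt_const hs)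
  refine le_csSup ⟨T, fun u hu => ?_⟩ ⟨ht, hst⟩
  by_contra! hTu
  exact (hT u hTu.le).not_ge hu.2

lemma settlingTime_antitoneOn (hβ : IsKL β) : AntitoneOn (settlingTime β) (Ioi 0) := by
  intro s (hs : 0 < s) s' (hs' : 0 < s') hss'
  refine Real.sSup_le (fun t ⟨ht, hst⟩ => ?_) (Real.sSup_nonneg fun t ht => ht.1)
  refine hβ.le_settlingTime hs ht ?_
  calc s ≤ s' := hss'
    _ ≤ β s'⁻¹ t := hst
    _ ≤ β s⁻¹ t := hβ.mono_left (inv_pos.2 hs').le (inv_anti₀ hs hss') ht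

lemma eventually_le_settlingTime (hβ : IsKL β) {r : ℝ} (hr : 0 < r) :
    ∀ᶠ t in atTop, t ≤ settlingTime β (β r t) := by
  have hlim := hβ.tendsto_zero hr.le
  filter_upwards [hlim.eventually_lt_const (inv_pos.2 hr), eventually_ge_atTop 0] with t hsmall ht
  have hpos : 0 < β r t := hβ.pos hr ht
  exact hβ.le_settlingTime hpos ht
    (hβ.mono_left hr.le ((le_inv_comm₀ hpos hr).1 hsmall.le) ht)

lemma exists_isKInf_eventually_le_exp (hβ : IsKL β) :
    ∃ α, IsKInf α ∧ ∀ r, 0 < r → ∀ᶠ t in atTop, α (β r t) ≤ Real.exp (-2 * t) := by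
  -- Rate `2` leaves decay at rate `1` after multiplication by the weight `exp t`.
  obtain ⟨α, hα, hα_le⟩ := exists_isKInf_le_mul (a := fun s => Real.exp (-2 * settlingTime β s))
    (fun s hs s' hs' hss' => Real.exp_le_exp.2 <|
      mul_le_mul_of_nonpos_left (hβ.settlingTime_antitoneOn hs hs' hss') (by norm_num))
    (fun s _ => Real.exp_pos _)
  refine ⟨α, hα, fun r hr => ?_⟩
  filter_upwards [hβ.eventually_le_settlingTime hr, eventually_ge_atTop 0,
    (hβ.tendsto_zero hr.le).eventually_le_const one_pos] with t htime ht hone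
  calc α (β r t) ≤ β r t * Real.exp (-2 * settlingTime β (β r t)) := hα_le _ (hβ.pos hr ht)
    _ ≤ 1 * Real.exp (-2 * t) := by
      refine mul_le_mul hone (Real.exp_le_exp.2 ?_) (Real.exp_pos _).le zero_le_one
      linarith
    _ = Real.exp (-2 * t) := one_mul _

lemma eventually_exp_mul_le_max (hβ : IsKL β) {α : ℝ → ℝ} (hα : IsKInf α) {R : ℝ}
    (hdecay : ∀ᶠ t in atTop, α (β R t) ≤ Real.exp (-2 * t)) :
    ∀ᶠ T in atTop, ∀ r, 0 ≤ r → r ≤ R → ∀ t, 0 ≤ t →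
      Real.exp t * α (β r t) ≤ max (Real.exp T * α (β r 0)) (Real.exp (-T)) := by
  filter_upwards [eventually_forall_ge_atTop.2 hdecay] with T hT r hr hrR t ht
  rcases le_total t T with htT | hTt
  · refine le_max_of_le_left (mul_le_mul (Real.exp_le_exp.2 htT) ?_ ?_ (Real.exp_pos T).le)
    · exact hα.mono (hβ.nonneg_s7 hr ht) (hβ.anti_right hr le_rfl ht)
    · exact hα.nonneg_s7 (hβ.nonneg_s7 hr ht)
  · refine le_max_of_le_right ?_
    calc Real.exp t * α (β r t) ≤ Real.exp t * Real.exp (-2 * t) := by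
          gcongr
          exact (hα.mono (hβ.nonneg_s7 hr ht) (hβ.mono_left hr hrR ht)).trans (hT t hTt)
      _ = Real.exp (-t) := by rw [← Real.exp_add]; ring_nf
      _ ≤ Real.exp (-T) := Real.exp_le_exp.2 (neg_le_neg hTt)

lemma bddAbove_range_exp_mul (hβ : IsKL β) {α : ℝ → ℝ} (hα : IsKInf α) {r : ℝ} (hr : 0 ≤ r)
    (hdecay : ∀ᶠ t in atTop, α (β r t) ≤ Real.exp (-2 * t)) :
    BddAbove (range fun t : ℝ≥0 => Real.exp t * α (β r t)) := by
  obtain ⟨T, hT⟩ := (hβ.eventually_exp_mul_le_max hα hdecay).exists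
  exact ⟨_, forall_mem_range.2 fun t => hT r hr le_rfl t t.coe_nonneg⟩

lemma tendsto_iSup_exp_mul (hβ : IsKL β) {α : ℝ → ℝ} (hα : IsKInf α) {R : ℝ} (hR : 0 < R)
    (hdecay : ∀ᶠ t in atTop, α (β R t) ≤ Real.exp (-2 * t)) :
    Tendsto (fun r => ⨆ t : ℝ≥0, Real.exp t * α (β r t)) (𝓝[≥] 0) (𝓝 0) := by
  refine tendsto_order.2 ⟨fun c hc => ?_, fun ε hε => ?_⟩
  · filter_upwards [self_mem_nhdsWithin] with r hr
    exact hc.trans_le <| Real.iSup_nonneg fun t =>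
      mul_nonneg (Real.exp_pos t).le (hα.nonneg_s7 (hβ.nonneg_s7 hr t.coe_nonneg))
  · obtain ⟨T, hT, hTε⟩ := ((hβ.eventually_exp_mul_le_max hα hdecay).and
      (Real.tendsto_exp_neg_atTop_nhds_zero.eventually_lt_const hε)).exists
    have hcont : ContinuousWithinAt (fun r => Real.exp T * α (β r 0)) (Ici 0) 0 :=
      (continuousOn_const.mul (hα.1.comp (hβ.continuousOn_left le_rfl)
        fun r hr => hβ.nonneg_s7 hr le_rfl)) 0 self_mem_Ici
    have hsmall : ∀ᶠ r in 𝓝[≥] (0 : ℝ), Real.exp T * α (β r 0) < ε :=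
      hcont.eventually_lt_const (by simpa [hβ.map_zero le_rfl, hα.2.2.1] using hε)
    filter_upwards [hsmall, self_mem_nhdsWithin, nhdsWithin_le_nhds (ge_mem_nhds hR)]
      with r hrε hr hrR
    exact (ciSup_le fun t : ℝ≥0 => hT r hr hrR t t.coe_nonneg).trans_lt (max_lt hrε hTε)

/-- **Sontag's lemma** on `KL` functions. -/
lemma exists_isKInf_le_exp_neg_mul (hβ : IsKL β) :
    ∃ α ρ, IsKInf α ∧ IsKInf ρ ∧
      ∀ r, 0 ≤ r → ∀ t, 0 ≤ t → α (β r t) ≤ Real.exp (-t) * ρ r := by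
  obtain ⟨α, hα, hdecay⟩ := hβ.exists_isKInf_eventually_le_exp
  let b : ℝ → ℝ≥0 → ℝ := fun r t => Real.exp t * α (β r t)
  have hb_zero : ∀ t, b 0 t = 0 := fun t => by
    simp [b, hβ.map_zero t.coe_nonneg, hα.2.2.1]
  have hb_mono : ∀ r r' t, 0 ≤ r → r ≤ r' → b r t ≤ b r' t := fun r r' t hr hrr' =>
    mul_le_mul_of_nonneg_left (hα.mono (hβ.nonneg_s7 hr t.coe_nonneg)
      (hβ.mono_left hr hrr' t.coe_nonneg)) (Real.exp_pos t).le
  have hbdd : ∀ r, 0 ≤ r → BddAbove (range (b r)) := by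
    intro r hr
    rcases hr.eq_or_lt with rfl | hr
    · exact ⟨0, forall_mem_range.2 fun t => (hb_zero t).le⟩
    · exact hβ.bddAbove_range_exp_mul hα hr.le (hdecay r hr)
  have hsup_zero : ⨆ t, b 0 t = 0 := by simp only [hb_zero, ciSup_const]
  obtain ⟨ρ, hρ, hρ_ge⟩ := exists_isKInf_ge_of_monotoneOn (V := fun r => ⨆ t, b r t)
    (fun r hr r' hr' hrr' => ciSup_mono (hbdd r' hr') fun t => hb_mono r r' t hr hrr') hsup_zero
    (by simpa only [ContinuousWithinAt, hsup_zero] using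
      hβ.tendsto_iSup_exp_mul hα one_pos (hdecay 1 one_pos))
  refine ⟨α, ρ, hα, hρ, fun r hr t ht => ?_⟩
  rw [Real.exp_neg, ← div_eq_inv_mul, le_div_iff₀' (Real.exp_pos t)]
  exact (le_ciSup (hbdd r hr) ⟨t, ht⟩).trans (hρ_ge r hr)

end IsKL

lemma isKL_symm_rpow_mul {e : ℝ ≃o ℝ} (he : e 0 = 0) {α : ℝ → ℝ} (hα : IsKInf α) {γ : ℝ}
    (hγ : γ ∈ Ioo 0 1) : IsKL fun r t => e.symm (γ ^ t * α r) := by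
  have he_symm : e.symm 0 = 0 := by rw [e.symm_apply_eq, he]
  have he_cont : Continuous e.symm := e.symm.continuous
  refine ⟨?_, fun t _ => ⟨?_, ?_, by simp [hα.2.2.1, he_symm]⟩, fun r hr => ⟨?_, ?_⟩⟩
  · refine he_cont.comp_continuousOn (ContinuousOn.mul ?_ ?_)
    · exact (continuous_const.rpow continuous_snd fun _ => Or.inl hγ.1.ne').continuousOn
    · exact hα.1.comp continuousOn_fst fun p hp => hp.1
  · exact he_cont.comp_continuousOn (continuousOn_const.mul hα.1)
  · exact e.symm.strictMono.comp_strictMonoOn fun r hr r' hr' hrr' =>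
      mul_lt_mul_of_pos_left (hα.2.1 hr hr' hrr') (Real.rpow_pos_of_pos hγ.1 t)
  · intro t _ t' _ htt'
    exact e.symm.monotone (mul_le_mul_of_nonneg_right
      (Real.rpow_le_rpow_of_exponent_ge hγ.1 hγ.2.le htt') (hα.nonneg_s7 hr))
  · have hlim : Tendsto (fun t : ℝ => γ ^ t * α r) atTop (𝓝 0) := by
      simpa using (tendsto_rpow_atTop_of_base_lt_one γ (by linarith [hγ.1]) hγ.2).mul_const (α r)
    simpa [he_symm, Function.comp_def] using (he_cont.tendsto 0).comp hlim

end ComparisonFunctions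

section LabeledGraphs

variable {A S : Type*} {E : Set (S × S × A)}

lemma shiftMap_iterate_apply (z : ℤ → A) (k : ℕ) (m : ℤ) : (shiftMap^[k] z) m = z (m + k) := by
  induction k generalizing z with
  | zero => simp
  | succ k ih => rw [Function.iterate_succ_apply, ih, shiftMap, Nat.cast_succ, add_assoc]

lemma IsLabeledWalk.translate_mem_graphLangAt {z : ℤ → A} {s : ℤ → S} (h : IsLabeledWalk E z s)
    (k : ℤ) : (fun m => z (m + k)) ∈ graphLangAt E (s k) :=
  ⟨fun m => s (m + k), fun m => by simpa only [add_right_comm] using h (m + k), by simp⟩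

lemma graphLangAt_subset_graphLang (E : Set (S × S × A)) (j : S) :
    graphLangAt E j ⊆ graphLang E :=
  fun _ ⟨s, hs, _⟩ => ⟨s, hs⟩

lemma consSeq_postSeq_image_subset {j j' : S} {i : A} (hE : (j, j', i) ∈ E)
    (hj : (graphLangAt E j).Nonempty) :
    consSeq i (postSeq '' graphLangAt E j') ⊆ postSeq '' graphLangAt E j := by
  rintro w ⟨hw0, z', ⟨s', hs', rfl⟩, hz'⟩
  obtain ⟨z, s, hs, rfl⟩ := hj
  refine ⟨fun k => if k < 0 then z k else if k = 0 then i else z' (k - 1),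
    ⟨fun k => if k ≤ 0 then s k else s' (k - 1), fun k => ?_, by simp⟩, funext fun m => ?_⟩
  · rcases lt_trichotomy k 0 with hk | rfl | hk
    · simpa [hk, hk.le, Int.add_one_le_iff.2 hk] using hs k
    · simpa using hE
    · have : ¬k + 1 ≤ 0 := by lia
      simpa [hk.not_ge, hk.not_gt, hk.ne', this] using hs' (k - 1)
  · cases m with
    | zero => simp [postSeq, hw0]
    | succ m =>
      have hm : (m : ℤ) + 1 ≠ 0 ∧ ¬(m : ℤ) + 1 < 0 := by lia
      simpa [postSeq, hm] using congrFun hz' m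

end LabeledGraphs

section SwitchedSystems

variable {A S X : Type*}

/-- The solution of the switched system `x (k + 1) = f (x k) (w k)`, driven by a one-sided
sequence `w`; the solution driven by a bi-infinite `z` is `switchedSol f x (postSeq z)`. -/
def switchedSol (f : X → A → X) (x : X) (w : ℕ → A) : ℕ → X
  | 0 => x
  | k + 1 => f (switchedSol f x w k) (w k)

lemma switchedSol_succ_left (f : X → A → X) (x : X) (w : ℕ → A) (k : ℕ) :
    switchedSol f x w (k + 1) = switchedSol f (f x (w 0)) (fun m => w (m + 1)) k := by
  induction k with
  | zero => rfl
  | succ k ih => rw [switchedSol, ih, switchedSol]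

lemma sol_eq_switchedSol {n : ℕ} (f : (Fin n → ℝ) → A → Fin n → ℝ) (x : Fin n → ℝ) (z : ℤ → A)
    (k : ℕ) : sol (fun x w => f x (w 0)) x z k = switchedSol f x (postSeq z) k := by
  induction k with
  | zero => rfl
  | succ k ih => rw [sol, switchedSol, ih, shiftMap_iterate_apply, zero_add, postSeq]

/-- The decay condition of a `G`-based Lyapunov function, for `G` the graph with edge set `E`. -/
def DecaysAlongEdges (E : Set (S × S × A)) (f : X → A → X) (W : X → S → ℝ) (γ : ℝ) : Prop :=
  ∀ x j j' i, (j, j', i) ∈ E →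
    (∃ z : ℤ → A, z ∈ graphLangAt E j ∧ z 0 = i ∧ shiftMap z ∈ graphLangAt E j') →
    W (f x i) j' ≤ γ * W x j

lemma DecaysAlongEdges.le_pow_mul {E : Set (S × S × A)} {f : X → A → X} {W : X → S → ℝ} {γ : ℝ}
    (hW : DecaysAlongEdges E f W γ) (hγ : 0 ≤ γ) {z : ℤ → A} {s : ℤ → S}
    (hs : IsLabeledWalk E z s) (x : X) (k : ℕ) :
    W (switchedSol f x (postSeq z) k) (s k) ≤ γ ^ k * W x (s 0) := by
  refine le_geom (u := fun m : ℕ => W (switchedSol f x (postSeq z) m) (s m)) hγ k fun m _ => ?_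
  refine hW _ _ _ _ (hs m)
    ⟨fun l => z (l + m), hs.translate_mem_graphLangAt m, by simp [postSeq], ?_⟩
  have hshift : shiftMap (fun l => z (l + m)) = fun l => z (l + (m + 1)) :=
    funext fun l => congrArg z (by ring)
  simpa only [hshift, Nat.cast_succ] using hs.translate_mem_graphLangAt (m + 1)

/-- The set of values `exp k * v (x k)` over all solutions from `x` driven by a sequence in `B`; its
supremum is the converse Lyapunov function at `x`. The value `v x` is added so that the supremum is
meaningful when `B` is empty. -/
def weightedValues (v : X → ℝ) (f : X → A → X) (x : X) (B : Set (ℕ → A)) : Set ℝ :=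
  insert (v x) {y | ∃ (k : ℕ), ∃ w ∈ B, y = Real.exp k * v (switchedSol f x w k)}

lemma sSup_weightedValues_le {v : X → ℝ} {f : X → A → X} {x : X} {i : A} {B B' : Set (ℕ → A)}
    (hB' : B'.Nonempty) (hcons : consSeq i B' ⊆ B) (hbdd : BddAbove (weightedValues v f x B)) :
    sSup (weightedValues v f (f x i) B') ≤ Real.exp (-1) * sSup (weightedValues v f x B) := by
  have hstep : ∀ (k : ℕ), ∀ w ∈ B', Real.exp k * v (switchedSol f (f x i) w k) ≤
      Real.exp (-1) * sSup (weightedValues v f x B) := by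
    intro k w hw
    let iw : ℕ → A := fun m => Nat.casesOn m i w
    have hmem : Real.exp (k + 1 : ℕ) * v (switchedSol f x iw (k + 1)) ≤
        sSup (weightedValues v f x B) :=
      le_csSup hbdd (mem_insert_of_mem _ ⟨k + 1, iw, hcons ⟨rfl, hw⟩, rfl⟩)
    rw [switchedSol_succ_left] at hmem
    calc Real.exp k * v (switchedSol f (f x i) w k)
        = Real.exp (-1) * (Real.exp (k + 1 : ℕ) * v (switchedSol f (f x i) w k)) := by
          rw [← mul_assoc, ← Real.exp_add]; simp
      _ ≤ Real.exp (-1) * sSup (weightedValues v f x B) := by gcongr; exact hmem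
  refine csSup_le (insert_nonempty _ _) (forall_mem_insert.2 ⟨?_, ?_⟩)
  · obtain ⟨w, hw⟩ := hB'
    simpa [switchedSol] using hstep 0 w hw
  · rintro _ ⟨k, w, hw, rfl⟩
    exact hstep k w hw

variable [SeminormedAddGroup X]

/-- Global uniform asymptotic stability of the switched system `f` over a set `Z` of bi-infinite
sequences. -/
def IsGUAS (f : X → A → X) (Z : Set (ℤ → A)) : Prop :=
  ∃ β : ℝ → ℝ → ℝ, IsKL β ∧
    ∀ (k : ℕ) (x : X) (z : ℤ → A), z ∈ Z → ‖switchedSol f x (postSeq z) k‖ ≤ β ‖x‖ k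

/-- `W` is a `G`-based Lyapunov function of the switched system `f`, for `G` the graph with edge
set `E`; the members of the covering are indexed by the nodes, so `W x j` is `W (x, Z(G, j))`. -/
def IsGBasedLyapunov (E : Set (S × S × A)) (f : X → A → X) (W : X → S → ℝ) : Prop :=
  ∃ (α₁ α₂ : ℝ → ℝ) (γ : ℝ), IsKInf α₁ ∧ IsKInf α₂ ∧ γ ∈ Ico (0 : ℝ) 1 ∧
    (∀ x j, α₁ ‖x‖ ≤ W x j ∧ W x j ≤ α₂ ‖x‖) ∧ DecaysAlongEdges E f W γ

theorem IsGBasedLyapunov.isGUAS {E : Set (S × S × A)} {f : X → A → X} {W : X → S → ℝ}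
    (hW : IsGBasedLyapunov E f W) : IsGUAS f (graphLang E) := by
  obtain ⟨α₁, α₂, γ, hα₁, hα₂, hγ, hbounds, hdec⟩ := hW
  obtain ⟨e, he⟩ := hα₁.exists_orderIso_eqOn_s7
  have he0 : e 0 = 0 := (he self_mem_Ici).trans hα₁.2.2.1
  -- `γ` may be `0`, while the `KL` bound must be strictly increasing in its first argument.
  obtain ⟨c, hγc, hc⟩ := exists_between hγ.2
  have hc_pos : 0 < c := hγ.1.trans_lt hγc
  refine ⟨fun r t => e.symm (c ^ t * α₂ r), isKL_symm_rpow_mul he0 hα₂ ⟨hc_pos, hc⟩, ?_⟩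
  rintro k x z ⟨s, hs⟩
  rw [e.le_symm_apply, he (norm_nonneg _), Real.rpow_natCast]
  calc α₁ ‖switchedSol f x (postSeq z) k‖ ≤ W (switchedSol f x (postSeq z) k) (s k) :=
        (hbounds _ _).1
    _ ≤ γ ^ k * W x (s 0) := hdec.le_pow_mul hγ.1 hs x k
    _ ≤ c ^ k * α₂ ‖x‖ :=
      mul_le_mul (pow_le_pow_left₀ hγ.1 hγc.le k) (hbounds _ _).2
        ((hα₁.nonneg_s7 (norm_nonneg x)).trans (hbounds _ _).1) (pow_nonneg hc_pos.le k)

theorem IsGUAS.exists_isGBasedLyapunov {E : Set (S × S × A)} {f : X → A → X}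
    (hf : IsGUAS f (graphLang E)) : ∃ W : X → S → ℝ, IsGBasedLyapunov E f W := by
  obtain ⟨β, hβ, hstable⟩ := hf
  obtain ⟨α, ρ, hα, hρ, hαρ⟩ := hβ.exists_isKInf_le_exp_neg_mul
  let V : X → S → Set ℝ := fun x j =>
    weightedValues (fun y => α ‖y‖) f x (postSeq '' graphLangAt E j)
  have hupper : ∀ x j, (ρ + α) ‖x‖ ∈ upperBounds (V x j) := by
    intro x j
    refine forall_mem_insert.2 ⟨le_add_of_nonneg_left (hρ.nonneg_s7 (norm_nonneg x)), ?_⟩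
    rintro _ ⟨k, _, ⟨z, hz, rfl⟩, rfl⟩
    have hαk : α ‖switchedSol f x (postSeq z) k‖ ≤ Real.exp (-k) * ρ ‖x‖ :=
      (hα.mono (norm_nonneg _) (hstable k x z (graphLangAt_subset_graphLang E j hz))).trans
        (hαρ _ (norm_nonneg x) k k.cast_nonneg)
    calc Real.exp k * α ‖switchedSol f x (postSeq z) k‖
        ≤ Real.exp k * (Real.exp (-k) * ρ ‖x‖) := by gcongr
      _ = ρ ‖x‖ := by rw [← mul_assoc, ← Real.exp_add]; simp
      _ ≤ (ρ + α) ‖x‖ := le_add_of_nonneg_right (hα.nonneg_s7 (norm_nonneg x))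
  refine ⟨fun x j => sSup (V x j), α, ρ + α, Real.exp (-1), hα, hρ.add hα,
    ⟨(Real.exp_pos _).le, Real.exp_lt_one_iff.2 (by norm_num)⟩, fun x j => ⟨?_, ?_⟩, ?_⟩
  · exact le_csSup ⟨_, hupper x j⟩ (mem_insert _ _)
  · exact csSup_le (insert_nonempty _ _) (hupper x j)
  · rintro x j j' i hE ⟨z, hz, -, hz'⟩
    exact sSup_weightedValues_le ⟨_, mem_image_of_mem postSeq hz'⟩
      (consSeq_postSeq_image_subset hE ⟨z, hz⟩) ⟨_, hupper x j⟩

theorem switched_guas_iff_exists_gBased_lyapunov_general (E : Set (S × S × A)) (f : X → A → X) :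
    IsGUAS f (graphLang E) ↔ ∃ W : X → S → ℝ, IsGBasedLyapunov E f W :=
  ⟨IsGUAS.exists_isGBasedLyapunov, fun ⟨_, hW⟩ => hW.isGUAS⟩

end SwitchedSystems

/-- Theorem (finite-covering converse Lyapunov theorem for switched systems): for any
g-covering `C` of `Z` with presentation `E`, the switched system `x(k+1) = f(x(k), z k)`
is GUAS over `Z` iff it admits a `G`-based Lyapunov function. -/
theorem switched_guas_iff_exists_gBased_lyapunov
    {A : Type*} [Fintype A] {n K : ℕ} (Z : Set (ℤ → A))
    (C : Fin K → Set (ℤ → A)) (E : Set (Fin K × Fin K × A))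
    (hpres : IsPresentation E C Z)
    (f : (Fin n → ℝ) → A → Fin n → ℝ) :
    (∃ β : ℝ → ℝ → ℝ, IsKL β ∧
      ∀ (k : ℕ) (x0 : Fin n → ℝ) (z : ℤ → A), z ∈ Z →
        ‖sol (fun x w => f x (w 0)) x0 z k‖ ≤ β ‖x0‖ (k : ℝ)) ↔
    (∃ (W : (Fin n → ℝ) → Fin K → ℝ) (α₁ α₂ : ℝ → ℝ) (γ : ℝ),
      IsKInf α₁ ∧ IsKInf α₂ ∧ γ ∈ Set.Ico (0 : ℝ) 1 ∧
      (∀ (x : Fin n → ℝ) (j : Fin K), α₁ ‖x‖ ≤ W x j ∧ W x j ≤ α₂ ‖x‖) ∧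
      (∀ (x : Fin n → ℝ) (j j' : Fin K) (i : A), (j, j', i) ∈ E →
        (∃ z : ℤ → A, z ∈ C j ∧ z 0 = i ∧ shiftMap z ∈ C j') →
        W (f x i) j' ≤ γ * W x j)) := by
  obtain ⟨rfl, hC⟩ := hpres
  obtain rfl : C = graphLangAt E := funext hC
  simp only [sol_eq_switchedSol]
  exact switched_guas_iff_exists_gBased_lyapunov_general E f
end

section
/- Let Z ⊆ Σ^ℤ be a shift of M-finite type, A : Σ → ℝ^{n×n}, and consider the switched linear system x(k+1) = A(z_k) x(k) over Z. Fix γ ∈ [0,1). The following are equivalent: (1) for every γ̃ ∈ (γ, 1), the system is uniformly exponentially stable over Z with decay rate γ̃; (2) for every γ̃ ∈ (γ, 1), there exist K ≥ M, k ∈ {0, …, K}, constants M₁, M₂ > 0 and a map Q : Σ^K ∩ L(Z) → S^n_+ into the symmetric positive definite n×n matrices such that M₁ I_n ⪯ Q(w) ⪯ M₂ I_n for every node w of G_{K,k}(Z), and A(h)ᵀ Q(v) A(h) ≺ γ̃² Q(w) for every edge (w, v, h) of G_{K,k}(Z). -/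
open Set Filter Matrix

section DeBruijn

variable {A : Type*}

/-- A word `w` of length `k` belongs to the language `L(Z)`: it occurs as a consecutive
block of some element of `Z`. -/
def inLang (Z : Set (ℤ → A)) {k : ℕ} (w : Fin k → A) : Prop :=
  ∃ z ∈ Z, ∃ m : ℤ, ∀ t : Fin k, z (m + (t.val : ℤ)) = w t

/-- `Z` is a shift of `M`-finite type: it is cut out by a set of allowed blocks of
length `M + 1`. -/
def IsSFT (Z : Set (ℤ → A)) (M : ℕ) : Prop :=
  ∃ F : Set (Fin (M + 1) → A),
    Z = {z : ℤ → A | ∀ m : ℤ, (fun t : Fin (M + 1) => z (m + (t.val : ℤ))) ∈ F}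

/-- The edge set of the `Z`-De Bruijn graph of order `K` and position `k`: nodes are the
words of `Σ^K ∩ L(Z)`, and `(w, v, h)` is an edge iff the suffix of `w` equals the prefix
of `v` and moreover `v (K-1) = h` if `k = 0`, or `w (K-k) = h` if `1 ≤ k ≤ K`. -/
def deBruijnE (Z : Set (ℤ → A)) (K k : ℕ) :
    Set ((Fin K → A) × (Fin K → A) × A) :=
  {p | inLang Z p.1 ∧ inLang Z p.2.1 ∧
    (∀ (t : ℕ) (ht : t + 1 < K), p.1 ⟨t + 1, ht⟩ = p.2.1 ⟨t, Nat.lt_of_succ_lt ht⟩) ∧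
    (if k = 0 then ∀ t : Fin K, (t.val : ℕ) = K - 1 → p.2.1 t = p.2.2
     else ∀ t : Fin K, (t.val : ℕ) = K - k → p.1 t = p.2.2)}

/-- The reversal `w^⊤ = (i_{K-1}, …, i_0)` of a word `w = (i_0, …, i_{K-1})`. -/
def wordRev {K : ℕ} (w : Fin K → A) : Fin K → A :=
  fun t => w ⟨K - 1 - t.val, by have := t.isLt; omega⟩

end DeBruijn

/-!
Let `Φ k` be the transition matrix along a sequence in `Z`. If the system is stable with a rate
`γ' < γ`, then `Φ kᵀ * Φ k ≤ C * γ' ^ (2 * k)`, and the truncated Gramian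
`Q = ∑ j < K, γ ^ (-2 * j) * Φ jᵀ * Φ j` only depends on the first `K - 1` letters, so it is a
function of words. Along an edge, `γ ^ 2 * Q w - (A h)ᵀ * Q v * A h` telescopes to
`γ ^ 2 * (1 - γ ^ (-2 * K) * Φ Kᵀ * Φ K)`, which is positive definite once
`C * (γ' / γ) ^ (2 * K) < 1`. Conversely, the blocks of a sequence in `Z` form a walk in the
De Bruijn graph, along which the edge inequalities multiply up to
`Φ kᵀ * Q (w k) * Φ k ≤ γ ^ (2 * k) * Q (w 0)`.
-/

section Transition

variable {R : Type*} [Monoid R]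

/-- The transition operator `B (k - 1) * ⋯ * B 0` of the time-varying linear system
`x (i + 1) = B i * x i` from time `0` to time `k`. -/
def transition (B : ℕ → R) : ℕ → R
  | 0 => 1
  | k + 1 => B k * transition B k

theorem transition_congr {B C : ℕ → R} {k : ℕ} (h : ∀ i < k, B i = C i) :
    transition B k = transition C k := by
  induction k with
  | zero => rfl
  | succ k ih =>
    rw [transition, transition, h k k.lt_succ_self, ih fun i hi => h i (hi.trans k.lt_succ_self)]

theorem transition_succ' (B : ℕ → R) (k : ℕ) :
    transition B (k + 1) = transition (fun i => B (i + 1)) k * B 0 := by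
  induction k with
  | zero => simp [transition]
  | succ k ih => rw [transition, ih, transition, mul_assoc]

end Transition

section LyapunovDecrease

section OrderedSemiring

variable {𝕜 R : Type*} [CommSemiring 𝕜] [PartialOrder 𝕜] [Semiring R] [StarRing R]
  [PartialOrder R] [StarOrderedRing R] [Algebra 𝕜 R] [IsOrderedModule 𝕜 R]

theorem star_transition_mul_mul_transition_le {B Q : ℕ → R} {ρ : 𝕜} (hρ : 0 ≤ ρ)
    (h : ∀ k, star (B k) * Q (k + 1) * B k ≤ ρ • Q k) (k : ℕ) :
    star (transition B k) * Q k * transition B k ≤ ρ ^ k • Q 0 := by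
  induction k with
  | zero => simp [transition]
  | succ k ih =>
    calc star (transition B (k + 1)) * Q (k + 1) * transition B (k + 1)
        = star (transition B k) * (star (B k) * Q (k + 1) * B k) * transition B k := by
          simp only [transition, star_mul, mul_assoc]
      _ ≤ star (transition B k) * (ρ • Q k) * transition B k :=
          star_left_conjugate_le_conjugate (h k) _
      _ = ρ • (star (transition B k) * Q k * transition B k) := by
          rw [mul_smul_comm, smul_mul_assoc]
      _ ≤ ρ • ρ ^ k • Q 0 := smul_le_smul_of_nonneg_left ih hρ
      _ = ρ ^ (k + 1) • Q 0 := by rw [smul_smul, pow_succ']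

end OrderedSemiring

section OrderedField

variable {𝕜 R : Type*} [Field 𝕜] [LinearOrder 𝕜] [IsStrictOrderedRing 𝕜] [Ring R] [StarRing R]
  [PartialOrder R] [StarOrderedRing R] [Algebra 𝕜 R] [IsOrderedModule 𝕜 R]

theorem star_transition_mul_transition_le {B Q : ℕ → R} {ρ m₁ m₂ : 𝕜} (hρ : 0 ≤ ρ)
    (hm₁ : 0 < m₁) (hQ₁ : ∀ k, m₁ • 1 ≤ Q k) (hQ₂ : Q 0 ≤ m₂ • 1)
    (h : ∀ k, star (B k) * Q (k + 1) * B k ≤ ρ • Q k) (k : ℕ) :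
    star (transition B k) * transition B k ≤ (m₁⁻¹ * m₂ * ρ ^ k) • 1 := by
  have hm : m₁ • (star (transition B k) * transition B k) ≤ (m₂ * ρ ^ k) • 1 :=
    calc m₁ • (star (transition B k) * transition B k)
        = star (transition B k) * (m₁ • 1) * transition B k := by simp
      _ ≤ star (transition B k) * Q k * transition B k :=
          star_left_conjugate_le_conjugate (hQ₁ k) _
      _ ≤ ρ ^ k • Q 0 := star_transition_mul_mul_transition_le hρ h k
      _ ≤ ρ ^ k • m₂ • 1 := smul_le_smul_of_nonneg_left hQ₂ (pow_nonneg hρ k)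
      _ = (m₂ * ρ ^ k) • 1 := by rw [smul_smul, mul_comm]
  rwa [mul_assoc, mul_smul, le_inv_smul_iff_of_pos hm₁]

end OrderedField

end LyapunovDecrease

section Gramian

section Algebra

variable {𝕜 R : Type*} [CommSemiring 𝕜] [Semiring R] [StarRing R] [Algebra 𝕜 R]

/-- The observability Gramian over the horizon `N`, with weight `r ^ j` at time `j`, of the
system `x (i + 1) = B i * x i` with output `x`. -/
def gramian (r : 𝕜) (B : ℕ → R) (N : ℕ) : R :=
  ∑ j ∈ Finset.range N, r ^ j • (star (transition B j) * transition B j)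

theorem gramian_congr (r : 𝕜) {B C : ℕ → R} {N : ℕ} (h : ∀ i, i + 1 < N → B i = C i) :
    gramian r B N = gramian r C N :=
  Finset.sum_congr rfl fun j hj => by
    rw [transition_congr fun i hi => h i (by have := Finset.mem_range.1 hj; omega)]

theorem gramian_succ (r : 𝕜) (B : ℕ → R) (N : ℕ) :
    gramian r B (N + 1) =
      gramian r B N + r ^ N • (star (transition B N) * transition B N) :=
  Finset.sum_range_succ _ _

theorem gramian_succ' (r : 𝕜) (B : ℕ → R) (N : ℕ) :
    gramian r B (N + 1) = 1 + r • (star (B 0) * gramian r (fun i => B (i + 1)) N * B 0) := by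
  rw [gramian, Finset.sum_range_succ', add_comm, gramian, Finset.mul_sum, Finset.sum_mul,
    Finset.smul_sum]
  congr 1
  · simp [transition]
  · refine Finset.sum_congr rfl fun j _ => ?_
    rw [transition_succ', star_mul, mul_smul_comm, smul_mul_assoc, smul_smul, pow_succ']
    simp only [mul_assoc]

/-- The Gramian over the horizon `K` along the word `w` of length `K`. Past the end of `w` the
operators are continued by `1`; this choice is immaterial, since the Gramian only uses the first
`K - 1` of them. -/
noncomputable def wordGramian {A : Type*} (r : 𝕜) (f : A → R) {K : ℕ} (w : Fin K → A) : R :=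
  gramian r (Function.extend Fin.val (f ∘ w) 1) K

theorem wordGramian_eq_gramian {A : Type*} (r : 𝕜) (f : A → R) {K : ℕ} {w : Fin K → A}
    {s : ℕ → A} (h : ∀ i : Fin K, i + 1 < K → s i = w i) :
    wordGramian r f w = gramian r (fun i => f (s i)) K :=
  gramian_congr r fun i hi => by
    rw [h ⟨i, by omega⟩ hi]
    exact Fin.val_injective.extend_apply _ _ ⟨i, by omega⟩

end Algebra

section Order

variable {𝕜 R : Type*} [CommSemiring 𝕜] [PartialOrder 𝕜] [IsOrderedRing 𝕜] [Semiring R]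
  [StarRing R] [PartialOrder R] [StarOrderedRing R] [Algebra 𝕜 R] [IsOrderedModule 𝕜 R]

theorem gramian_nonneg {r : 𝕜} (hr : 0 ≤ r) (B : ℕ → R) (N : ℕ) : 0 ≤ gramian r B N :=
  Finset.sum_nonneg fun j _ => smul_nonneg (pow_nonneg hr j) (star_mul_self_nonneg _)

theorem one_le_gramian {r : 𝕜} (hr : 0 ≤ r) (B : ℕ → R) {N : ℕ} (hN : N ≠ 0) :
    1 ≤ gramian r B N := by
  obtain ⟨N, rfl⟩ := Nat.exists_eq_add_one_of_ne_zero hN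
  rw [gramian_succ']
  exact le_add_of_nonneg_right
    (smul_nonneg hr (star_left_conjugate_nonneg (gramian_nonneg hr _ _) _))

theorem gramian_le {r ρ C : 𝕜} (hr : 0 ≤ r) {B : ℕ → R}
    (hB : ∀ j, star (transition B j) * transition B j ≤ (C * ρ ^ j) • 1) (N : ℕ) :
    gramian r B N ≤ (C * ∑ j ∈ Finset.range N, (r * ρ) ^ j) • 1 := by
  rw [Finset.mul_sum, Finset.sum_smul]
  refine Finset.sum_le_sum fun j _ => ?_
  calc r ^ j • (star (transition B j) * transition B j)
      ≤ r ^ j • (C * ρ ^ j) • 1 := smul_le_smul_of_nonneg_left (hB j) (pow_nonneg hr j)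
    _ = (C * (r * ρ) ^ j) • 1 := by rw [smul_smul, mul_left_comm, mul_pow]

end Order

end Gramian

section SupEuclidean

open WithLp

variable {ι : Type*} [Fintype ι] {β : ι → Type*} [∀ i, SeminormedAddCommGroup (β i)]

theorem norm_le_norm_toLp (p : ENNReal) [Fact (1 ≤ p)] (x : ∀ i, β i) : ‖x‖ ≤ ‖toLp p x‖ :=
  (pi_norm_le_iff_of_nonneg (norm_nonneg _)).2 fun i => PiLp.norm_apply_le (toLp p x) i

theorem norm_toLp_two_sq_le (x : ∀ i, β i) : ‖toLp 2 x‖ ^ 2 ≤ Fintype.card ι * ‖x‖ ^ 2 := by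
  rw [PiLp.norm_sq_eq_of_L2]
  calc ∑ i, ‖x i‖ ^ 2 ≤ ∑ _i : ι, ‖x‖ ^ 2 := by gcongr with i; exact norm_le_pi_norm x i
    _ = Fintype.card ι * ‖x‖ ^ 2 := by simp

end SupEuclidean

section Loewner

open WithLp
open scoped MatrixOrder ComplexOrder

variable {𝕜 m n : Type*} [RCLike 𝕜] [Fintype m] [Fintype n]

theorem star_dotProduct_self_eq_norm_toLp_two_sq (x : n → 𝕜) :
    star x ⬝ᵥ x = (‖toLp 2 x‖ ^ 2 : ℝ) := by
  rw [dotProduct_comm, ← EuclideanSpace.inner_toLp_toLp, inner_self_eq_norm_sq_to_K]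
  norm_cast

variable [DecidableEq n]

theorem conjTranspose_mul_self_le_smul_one_iff {C : Matrix m n 𝕜} {a : ℝ} :
    Cᴴ * C ≤ a • 1 ↔ ∀ x, ‖toLp 2 (C *ᵥ x)‖ ^ 2 ≤ a * ‖toLp 2 x‖ ^ 2 := by
  have quadratic (x : n → 𝕜) : star x ⬝ᵥ ((a • 1 - Cᴴ * C) *ᵥ x) =
      (a * ‖toLp 2 x‖ ^ 2 - ‖toLp 2 (C *ᵥ x)‖ ^ 2 : ℝ) := by
    rw [sub_mulVec, dotProduct_sub, smul_mulVec, one_mulVec, dotProduct_smul, ← mulVec_mulVec,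
      dotProduct_mulVec _ Cᴴ, vecMul_conjTranspose, star_star]
    simp [star_dotProduct_self_eq_norm_toLp_two_sq, RCLike.real_smul_eq_coe_mul]
  have hermitian : (a • 1 - Cᴴ * C).IsHermitian :=
    (isHermitian_one.smul (IsSelfAdjoint.all a)).sub (isHermitian_conjTranspose_mul_self C)
  rw [Matrix.le_iff, posSemidef_iff_dotProduct_mulVec, and_iff_right hermitian]
  refine forall_congr' fun x => ?_
  rw [quadratic, RCLike.ofReal_nonneg, sub_nonneg]

theorem conjTranspose_mul_self_le_of_norm_mulVec_le {C : Matrix m n 𝕜} {c : ℝ}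
    (h : ∀ x, ‖C *ᵥ x‖ ≤ c * ‖x‖) : Cᴴ * C ≤ (Fintype.card m * c ^ 2) • 1 := by
  refine conjTranspose_mul_self_le_smul_one_iff.2 fun x => ?_
  calc ‖toLp 2 (C *ᵥ x)‖ ^ 2 ≤ Fintype.card m * ‖C *ᵥ x‖ ^ 2 := norm_toLp_two_sq_le _
    _ ≤ Fintype.card m * (c * ‖x‖) ^ 2 := by gcongr; exact h x
    _ = Fintype.card m * c ^ 2 * ‖x‖ ^ 2 := by ring
    _ ≤ Fintype.card m * c ^ 2 * ‖toLp 2 x‖ ^ 2 := by gcongr; exact norm_le_norm_toLp 2 x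

theorem norm_mulVec_le_of_conjTranspose_mul_self_le {C : Matrix m n 𝕜} {a : ℝ} (ha : 0 ≤ a)
    (h : Cᴴ * C ≤ a • 1) (x : n → 𝕜) : ‖C *ᵥ x‖ ≤ √(Fintype.card n * a) * ‖x‖ := by
  refine le_of_sq_le_sq ?_ (by positivity)
  calc ‖C *ᵥ x‖ ^ 2 ≤ ‖toLp 2 (C *ᵥ x)‖ ^ 2 := by gcongr; exact norm_le_norm_toLp 2 _
    _ ≤ a * ‖toLp 2 x‖ ^ 2 := conjTranspose_mul_self_le_smul_one_iff.1 h x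
    _ ≤ a * (Fintype.card n * ‖x‖ ^ 2) := by gcongr; exact norm_toLp_two_sq_le x
    _ = (√(Fintype.card n * a) * ‖x‖) ^ 2 := by rw [mul_pow, Real.sq_sqrt (by positivity)]; ring

theorem posDef_gramian_sub {B : ℕ → Matrix n n 𝕜} {r a : ℝ} {N : ℕ} (hr : 0 ≤ r)
    (hB : (transition B N)ᴴ * transition B N ≤ a • 1) (ha : r ^ N * a < 1) :
    (gramian r B N - r • ((B 0)ᴴ * gramian r (fun i => B (i + 1)) N * B 0)).PosDef := by
  set T := transition B N
  have telescope : gramian r B N - r • ((B 0)ᴴ * gramian r (fun i => B (i + 1)) N * B 0) =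
      1 - r ^ N • (Tᴴ * T) := by
    rw [sub_eq_sub_iff_add_eq_add]
    exact (gramian_succ r B N).symm.trans (gramian_succ' r B N)
  have decomposition : 1 - r ^ N • (Tᴴ * T) = (1 - r ^ N * a) • 1 + r ^ N • (a • 1 - Tᴴ * T) := by
    module
  rw [telescope, decomposition]
  exact (PosDef.one.smul (sub_pos.2 ha)).add_posSemidef (PosSemidef.smul hB (pow_nonneg hr N))

end Loewner

section Words

variable {A : Type*}

theorem IsSFT.preimage_shiftMap {Z : Set (ℤ → A)} {M : ℕ} (hZ : IsSFT Z M) :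
    shiftMap ⁻¹' Z = Z := by
  obtain ⟨F, rfl⟩ := hZ
  ext z
  refine (Equiv.addRight (1 : ℤ)).forall_congr fun {m} => ?_
  simp [shiftMap, add_right_comm]

theorem translate_mem_iff {Z : Set (ℤ → A)} (hZ : shiftMap ⁻¹' Z = Z) (z : ℤ → A) (m : ℤ) :
    (fun k => z (m + k)) ∈ Z ↔ z ∈ Z := by
  have succ (m : ℤ) : (fun k => z (m + 1 + k)) ∈ Z ↔ (fun k => z (m + k)) ∈ Z := by
    have shift : (fun k => z (m + 1 + k)) = shiftMap fun k => z (m + k) :=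
      funext fun k => congrArg z (by ring)
    rw [shift, ← mem_preimage, hZ]
  induction m with
  | zero => simp
  | succ m ih => exact (succ m).trans ih
  | pred m ih => rwa [← succ, sub_add_cancel]

theorem inLang.exists_mem_eq {Z : Set (ℤ → A)} (hZ : shiftMap ⁻¹' Z = Z) {K : ℕ} {w : Fin K → A}
    (hw : inLang Z w) : ∃ z ∈ Z, ∀ i : Fin K, z i = w i := by
  obtain ⟨z, hz, m, hm⟩ := hw
  exact ⟨fun k => z (m + k), (translate_mem_iff hZ z m).2 hz, hm⟩

theorem exists_mem_of_mem_deBruijnE_self {Z : Set (ℤ → A)} (hZ : shiftMap ⁻¹' Z = Z) {K : ℕ}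
    (hK : K ≠ 0) {w v : Fin K → A} {h : A} (he : (w, v, h) ∈ deBruijnE Z K K) :
    ∃ z ∈ Z, (∀ i : Fin K, z i = w i) ∧ z 0 = h ∧ ∀ i : Fin K, i + 1 < K → z (i + 1) = v i := by
  obtain ⟨hw, -, hv, hh⟩ := he
  rw [if_neg hK] at hh
  obtain ⟨z, hz, hzw⟩ := hw.exists_mem_eq hZ
  refine ⟨z, hz, hzw, ?_, ?_⟩
  · simpa using (hzw ⟨0, Nat.pos_of_ne_zero hK⟩).trans (hh _ (by simp))
  · intro i hi
    simpa using (hzw ⟨i + 1, hi⟩).trans (hv i hi)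

/-- The block of length `K` of the sequence `z` that starts at time `t`. -/
def block (z : ℤ → A) (K : ℕ) (t : ℤ) : Fin K → A := fun i => z (t + i)

theorem inLang_block {Z : Set (ℤ → A)} {z : ℤ → A} (hz : z ∈ Z) (K : ℕ) (t : ℤ) :
    inLang Z (block z K t) :=
  ⟨z, hz, t, fun _ => rfl⟩

theorem block_mem_deBruijnE {Z : Set (ℤ → A)} {z : ℤ → A} (hz : z ∈ Z) {K k : ℕ} (hk : k ≤ K)
    (t : ℤ) : (block z K (t + k - K), block z K (t + 1 + k - K), z t) ∈ deBruijnE Z K k := by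
  refine ⟨inLang_block hz _ _, inLang_block hz _ _, fun i hi => ?_, ?_⟩
  · exact congrArg z (by push_cast; ring)
  · split_ifs with h0 <;> exact fun i hi => congrArg z (by have := i.isLt; omega)

end Words

section SwitchedLinear

open scoped MatrixOrder

variable {A : Type*} {n : ℕ} {Z : Set (ℤ → A)} {Amap : A → Matrix (Fin n) (Fin n) ℝ}

theorem iterate_shiftMap_apply (z : ℤ → A) (k : ℕ) (m : ℤ) : shiftMap^[k] z m = z (m + k) := by
  induction k generalizing m with
  | zero => simp
  | succ k ih =>
    rw [Function.iterate_succ_apply', shiftMap, ih]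
    push_cast
    ring_nf

theorem sol_eq_transition_mulVec (Amap : A → Matrix (Fin n) (Fin n) ℝ) (x₀ : Fin n → ℝ)
    (z : ℤ → A) (k : ℕ) :
    sol (fun x w => Amap (w 0) *ᵥ x) x₀ z k = transition (fun i : ℕ => Amap (z i)) k *ᵥ x₀ := by
  induction k with
  | zero => simp [sol, transition]
  | succ k ih =>
    rw [sol, ih, transition, iterate_shiftMap_apply, zero_add, mulVec_mulVec]

/-- Uniform exponential stability with decay rate `γ` of the switched linear system
`x (k + 1) = Amap (z k) *ᵥ x k` over `Z`. -/
def IsUES (Z : Set (ℤ → A)) (Amap : A → Matrix (Fin n) (Fin n) ℝ) (γ : ℝ) : Prop :=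
  ∃ c : ℝ, 0 < c ∧ ∀ (k : ℕ) (x₀ : Fin n → ℝ) (z : ℤ → A), z ∈ Z →
    ‖sol (fun x w => Amap (w 0) *ᵥ x) x₀ z k‖ ≤ c * γ ^ k * ‖x₀‖

/-- `Q` is a quadratic Lyapunov function, with decay rate `γ` and bounds `M₁` and `M₂`, on the
De Bruijn graph of order `K` and position `k` of `Z`. -/
def IsDeBruijnLyapunov (Z : Set (ℤ → A)) (Amap : A → Matrix (Fin n) (Fin n) ℝ) (γ : ℝ) (K k : ℕ)
    (M₁ M₂ : ℝ) (Q : (Fin K → A) → Matrix (Fin n) (Fin n) ℝ) : Prop :=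
  (∀ w : Fin K → A, inLang Z w →
    (Q w - M₁ • (1 : Matrix (Fin n) (Fin n) ℝ)).PosSemidef ∧
    (M₂ • (1 : Matrix (Fin n) (Fin n) ℝ) - Q w).PosSemidef) ∧
  ∀ (w v : Fin K → A) (h : A), (w, v, h) ∈ deBruijnE Z K k →
    (γ ^ 2 • Q w - (Amap h)ᵀ * Q v * Amap h).PosDef

theorem isUES_iff_exists_conjTranspose_transition_mul_le {γ : ℝ} (hγ : 0 ≤ γ) :
    IsUES Z Amap γ ↔ ∃ C : ℝ, 0 < C ∧ ∀ z ∈ Z, ∀ k,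
      (transition (fun i : ℕ => Amap (z i)) k)ᴴ * transition (fun i : ℕ => Amap (z i)) k ≤
        (C * (γ ^ 2) ^ k) • 1 := by
  simp only [IsUES, sol_eq_transition_mulVec]
  constructor
  · rintro ⟨c, hc, h⟩
    refine ⟨(n + 1) * c ^ 2, by positivity, fun z hz k => ?_⟩
    refine (conjTranspose_mul_self_le_of_norm_mulVec_le fun x => h k x z hz).trans ?_
    refine smul_le_smul_of_nonneg_right ?_ zero_le_one
    calc (Fintype.card (Fin n)) * (c * γ ^ k) ^ 2 = n * c ^ 2 * (γ ^ 2) ^ k := by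
          rw [Fintype.card_fin]; ring
      _ ≤ (n + 1) * c ^ 2 * (γ ^ 2) ^ k := by gcongr; linarith
  · rintro ⟨C, hC, h⟩
    refine ⟨√(n * C) + 1, by positivity, fun k x z hz => ?_⟩
    calc ‖transition (fun i : ℕ => Amap (z i)) k *ᵥ x‖
        ≤ √(n * (C * (γ ^ 2) ^ k)) * ‖x‖ := by
          simpa using norm_mulVec_le_of_conjTranspose_mul_self_le (by positivity) (h z hz k) x
      _ = √(n * C) * γ ^ k * ‖x‖ := by
          rw [← mul_assoc, pow_right_comm, Real.sqrt_mul (by positivity),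
            Real.sqrt_sq (by positivity)]
      _ ≤ (√(n * C) + 1) * γ ^ k * ‖x‖ := by gcongr; linarith

theorem IsDeBruijnLyapunov.isUES {γ M₁ M₂ : ℝ} {K k : ℕ}
    {Q : (Fin K → A) → Matrix (Fin n) (Fin n) ℝ} (hQ : IsDeBruijnLyapunov Z Amap γ K k M₁ M₂ Q)
    (hγ : 0 ≤ γ) (hk : k ≤ K) (hM₁ : 0 < M₁) (hM₂ : 0 < M₂) : IsUES Z Amap γ := by
  refine (isUES_iff_exists_conjTranspose_transition_mul_le hγ).2
    ⟨M₁⁻¹ * M₂, by positivity, fun z hz => ?_⟩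
  have bounds (t : ℤ) := hQ.1 _ (inLang_block hz K t)
  refine star_transition_mul_transition_le (Q := fun t : ℕ => Q (block z K (t + k - K)))
    (sq_nonneg γ) hM₁ (fun t => (bounds _).1) (bounds _).2 fun t => ?_
  simpa using! (hQ.2 _ _ _ (block_mem_deBruijnE hz hk t)).posSemidef

theorem isDeBruijnLyapunov_wordGramian (hZ : shiftMap ⁻¹' Z = Z) {γ ρ C : ℝ} {K : ℕ}
    (hγ : 0 < γ) (hK : K ≠ 0) (hC : C * ((γ ^ 2)⁻¹ * ρ) ^ K < 1)
    (hA : ∀ z ∈ Z, ∀ k,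
      (transition (fun i : ℕ => Amap (z i)) k)ᴴ * transition (fun i : ℕ => Amap (z i)) k ≤
        (C * ρ ^ k) • 1) :
    IsDeBruijnLyapunov Z Amap γ K K 1 (C * ∑ j ∈ Finset.range K, ((γ ^ 2)⁻¹ * ρ) ^ j)
      (wordGramian (γ ^ 2)⁻¹ Amap) := by
  have hr : 0 ≤ (γ ^ 2)⁻¹ := by positivity
  refine ⟨fun w hw => ?_, fun w v h he => ?_⟩
  · obtain ⟨z, hz, hzw⟩ := hw.exists_mem_eq hZ
    rw [wordGramian_eq_gramian _ _ (s := fun i => z i) fun i _ => hzw i, one_smul]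
    exact ⟨Matrix.le_iff.1 (one_le_gramian hr _ hK),
      Matrix.le_iff.1 (gramian_le hr (hA z hz) K)⟩
  · obtain ⟨z, hz, hzw, rfl, hzv⟩ := exists_mem_of_mem_deBruijnE_self hZ hK he
    rw [wordGramian_eq_gramian _ _ (s := fun i => z i) fun i _ => hzw i,
      wordGramian_eq_gramian _ _ (s := fun i => z (i + 1)) hzv]
    have decay := posDef_gramian_sub hr (hA z hz K) (by rwa [mul_left_comm, ← mul_pow])
    have hγ2 : 0 < γ ^ 2 := by positivity
    simpa [smul_sub, hγ.ne'] using! decay.smul hγ2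

theorem IsUES.exists_isDeBruijnLyapunov (hZ : shiftMap ⁻¹' Z = Z) {γ γ' : ℝ}
    (h : IsUES Z Amap γ') (hγ' : 0 ≤ γ') (hlt : γ' < γ) (M : ℕ) :
    ∃ K k : ℕ, M ≤ K ∧ k ≤ K ∧ ∃ M₁ M₂ : ℝ, 0 < M₁ ∧ 0 < M₂ ∧
      ∃ Q : (Fin K → A) → Matrix (Fin n) (Fin n) ℝ, IsDeBruijnLyapunov Z Amap γ K k M₁ M₂ Q := by
  obtain ⟨C, hC, hA⟩ := (isUES_iff_exists_conjTranspose_transition_mul_le hγ').1 h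
  have hγ : 0 < γ := hγ'.trans_lt hlt
  set q := (γ ^ 2)⁻¹ * γ' ^ 2 with hq
  have hq0 : 0 ≤ q := by positivity
  have hq1 : q < 1 := by rw [hq, inv_mul_lt_one₀ (by positivity)]; gcongr
  have hlim : Tendsto (fun K => C * q ^ K) atTop (nhds 0) := by
    simpa using (tendsto_pow_atTop_nhds_zero_of_lt_one hq0 hq1).const_mul C
  obtain ⟨K, hCK, hMK, hK⟩ := ((hlim.eventually_lt_const one_pos).and
    ((eventually_ge_atTop M).and (eventually_ne_atTop 0))).exists
  exact ⟨K, K, hMK, le_rfl, 1, _, one_pos, mul_pos hC (geom_sum_pos hq0 hK), _,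
    isDeBruijnLyapunov_wordGramian hZ hγ hK hCK hA⟩

theorem switched_linear_ues_iff_exists_deBruijn_quadratic_lyapunov_general
    (hZ : shiftMap ⁻¹' Z = Z) (M : ℕ) {γ δ : ℝ} (hγ : 0 ≤ γ) :
    (∀ γt ∈ Ioo γ δ, IsUES Z Amap γt) ↔
      ∀ γt ∈ Ioo γ δ, ∃ K kk : ℕ, M ≤ K ∧ kk ≤ K ∧ ∃ M₁ M₂ : ℝ, 0 < M₁ ∧ 0 < M₂ ∧
        ∃ Q : (Fin K → A) → Matrix (Fin n) (Fin n) ℝ,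
          IsDeBruijnLyapunov Z Amap γt K kk M₁ M₂ Q := by
  constructor
  · intro h γt hγt
    obtain ⟨γ', hγγ', hγ'γt⟩ := exists_between hγt.1
    exact (h γ' ⟨hγγ', hγ'γt.trans hγt.2⟩).exists_isDeBruijnLyapunov hZ (hγ.trans hγγ'.le) hγ'γt M
  · intro h γt hγt
    obtain ⟨K, k, -, hk, M₁, M₂, hM₁, hM₂, Q, hQ⟩ := h γt hγt
    exact hQ.isUES (hγ.trans hγt.1.le) hk hM₁ hM₂

end SwitchedLinear

/-- Theorem (asymptotic converse Lyapunov theorem): for a switched linear system over a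
shift `Z` of `M`-finite type and fixed `γ ∈ [0,1)`, UES with every decay rate
`γ̃ ∈ (γ,1)` is equivalent to the existence, for every `γ̃ ∈ (γ,1)`, of a quadratic
`G_{K,k}(Z)`-based Lyapunov function for some `K ≥ M` and `k ∈ {0,…,K}`. -/
theorem switched_linear_ues_iff_exists_deBruijn_quadratic_lyapunov
    {A : Type*} [Fintype A] {n : ℕ} (Z : Set (ℤ → A)) (M : ℕ) (hZ : IsSFT Z M)
    (Amap : A → Matrix (Fin n) (Fin n) ℝ) (γ : ℝ) (hγ : γ ∈ Set.Ico (0 : ℝ) 1) :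
    (∀ γt ∈ Set.Ioo γ 1, ∃ c : ℝ, 0 < c ∧
      ∀ (k : ℕ) (x0 : Fin n → ℝ) (z : ℤ → A), z ∈ Z →
        ‖sol (fun x w => (Amap (w 0)).mulVec x) x0 z k‖ ≤ c * γt ^ k * ‖x0‖) ↔
    (∀ γt ∈ Set.Ioo γ 1, ∃ K kk : ℕ, M ≤ K ∧ kk ≤ K ∧
      ∃ M₁ M₂ : ℝ, 0 < M₁ ∧ 0 < M₂ ∧
      ∃ Q : (Fin K → A) → Matrix (Fin n) (Fin n) ℝ,
        (∀ w : Fin K → A, inLang Z w →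
          (Q w - M₁ • (1 : Matrix (Fin n) (Fin n) ℝ)).PosSemidef ∧
          (M₂ • (1 : Matrix (Fin n) (Fin n) ℝ) - Q w).PosSemidef) ∧
        (∀ (w v : Fin K → A) (h : A), (w, v, h) ∈ deBruijnE Z K kk →
          (γt ^ 2 • Q w - (Amap h)ᵀ * Q v * Amap h).PosDef)) := by
  exact switched_linear_ues_iff_exists_deBruijn_quadratic_lyapunov_general
    hZ.preimage_shiftMap M hγ.1
end
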